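/- Let G be a locally compact, Hausdorff, étale, principal, σ-compact, ample groupoid with dynamic asymptotic dimension at most d. Then the groupoid homology satisfies H_n(G) = 0 for all n > d, and H_d(G) is torsion-free. -/

import Mathlib

noncomputable section

open Function Set

attribute [local instance] Classical.propDecidable

universe u v w

/-- `ℤ[Y]`: the set of compactly supported continuous `ℤ`-valued functions on a space `Y`
(`ℤ` carries the discrete topology). -/
def ccZ (Y : Type v) [TopologicalSpace Y] : Set (Y → ℤ) :=
  {f | Continuous f ∧ HasCompactSupport f}

/-- `ℤ[Y]` as an additive subgroup of the group of all functions `Y → ℤ`. -/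
def ccZSub (Y : Type v) [TopologicalSpace Y] : AddSubgroup (Y → ℤ) where
  carrier := ccZ Y
  add_mem' {a b} ha hb := ⟨ha.1.add hb.1, ha.2.add hb.2⟩
  zero_mem' := ⟨continuous_const, by
    have h : tsupport (0 : Y → ℤ) = ∅ := by simp [tsupport]
    unfold HasCompactSupport
    rw [h]; exact isCompact_empty⟩
  neg_mem' {a} ha := ⟨ha.1.neg, HasCompactSupport.comp_left (g := fun z : ℤ => -z) ha.2 neg_zero⟩

@[simp] lemma mem_ccZSub {Y : Type v} [TopologicalSpace Y] (f : Y → ℤ) :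
    f ∈ ccZSub Y ↔ f ∈ ccZ Y := Iff.rfl

/-- The pushforward `φ_*(a)(y) = ∑_{x ∈ φ⁻¹(y)} a x` of a function along a map. -/
def pushf {X : Type v} {Y : Type w} (φ : X → Y) (a : X → ℤ) : Y → ℤ :=
  fun y => ∑ᶠ x ∈ φ ⁻¹' {y}, a x

/-- The generated equivalence relation. -/
inductive RelGen {α : Sort*} (r : α → α → Prop) : α → α → Prop
  | rel {x y} : r x y → RelGen r x y
  | refl (x) : RelGen r x x
  | symm {x y} : RelGen r x y → RelGen r y x
  | trans {x y z} : RelGen r x y → RelGen r y z → RelGen r x z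

/-- The purely algebraic data of a topological groupoid, with arrow space `G`:
the set of units, source and range maps (valued in units), a (junk-total)
partially defined composition, and inversion. -/
structure GroupoidData (G : Type u) where
  unitSpace : Set G
  source : G → G
  range : G → G
  mul : G → G → G
  inv : G → G

namespace GroupoidData

variable {G : Type u} (D : GroupoidData G)

/-- The product of two subsets of a groupoid. -/
def setMul (A B : Set G) : Set G :=
  {w | ∃ a ∈ A, ∃ b ∈ B, D.source a = D.range b ∧ w = D.mul a b}

/-- A bisection: a subset on which both the source and the range map are injective. -/
def IsBisection (B : Set G) : Prop := Set.InjOn D.source B ∧ Set.InjOn D.range B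

/-- Membership in the subgroupoid generated by a subset `A` of `G`. -/
inductive InSubgroupoid (A : Set G) : G → Prop
  | base {g} : g ∈ A → InSubgroupoid A g
  | inv {g} : InSubgroupoid A g → InSubgroupoid A (D.inv g)
  | mul {g h} : InSubgroupoid A g → InSubgroupoid A h → D.source g = D.range h →
      InSubgroupoid A (D.mul g h)

/-- `G` is a (locally compact, Hausdorff, étale) ample groupoid: all the algebraic groupoid
axioms hold, the structure maps are suitably continuous, the source and range maps are local
homeomorphisms onto the open unit space (étaleness), and the compact open bisections form a
basis for the topology (ampleness). -/
structure IsAmpleGroupoid [TopologicalSpace G] : Prop where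
  t2 : T2Space G
  locallyCompact : LocallyCompactSpace G
  source_mem : ∀ g, D.source g ∈ D.unitSpace
  range_mem : ∀ g, D.range g ∈ D.unitSpace
  source_unit : ∀ x ∈ D.unitSpace, D.source x = x
  range_unit : ∀ x ∈ D.unitSpace, D.range x = x
  source_mul : ∀ g h, D.source g = D.range h → D.source (D.mul g h) = D.source h
  range_mul : ∀ g h, D.source g = D.range h → D.range (D.mul g h) = D.range g
  mul_assoc : ∀ g h k, D.source g = D.range h → D.source h = D.range k →
      D.mul (D.mul g h) k = D.mul g (D.mul h k)
  source_inv : ∀ g, D.source (D.inv g) = D.range g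
  range_inv : ∀ g, D.range (D.inv g) = D.source g
  inv_mul : ∀ g, D.mul (D.inv g) g = D.source g
  mul_inv : ∀ g, D.mul g (D.inv g) = D.range g
  unit_mul : ∀ g, D.mul (D.range g) g = g
  mul_unit : ∀ g, D.mul g (D.source g) = g
  continuous_inv : Continuous D.inv
  continuous_mul : Continuous fun p : {p : G × G // D.source p.1 = D.range p.2} =>
      D.mul p.1.1 p.1.2
  open_unitSpace : IsOpen D.unitSpace
  etale_source : IsLocalHomeomorph D.source
  etale_range : IsLocalHomeomorph D.range
  ample : ∀ g : G, ∀ U : Set G, IsOpen U → g ∈ U →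
      ∃ B : Set G, g ∈ B ∧ B ⊆ U ∧ IsOpen B ∧ IsCompact B ∧ D.IsBisection B

/-- A groupoid is principal if every arrow with equal range and source is a unit. -/
def IsPrincipal : Prop := ∀ g, D.source g = D.range g → g ∈ D.unitSpace

/-- `G` has dynamic asymptotic dimension at most `d`: for every relatively compact open
subset `K` of `G` there are `d+1` open subsets of the unit space covering `r(K) ∪ s(K)` such
that the subgroupoid generated by the elements of `K` with source and range in one of these
sets is relatively compact. -/
def DadLE [TopologicalSpace G] (d : ℕ) : Prop :=
  ∀ K : Set G, IsOpen K → IsCompact (closure K) →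
    ∃ U : Fin (d + 1) → Set G,
      (∀ i, IsOpen (U i) ∧ U i ⊆ D.unitSpace) ∧
      (D.range '' K ∪ D.source '' K ⊆ ⋃ i, U i) ∧
      ∀ i, IsCompact (closure
        {g | D.InSubgroupoid {g ∈ K | D.source g ∈ U i ∧ D.range g ∈ U i} g})

/-! ### Matui's complex computing the Crainic–Moerdijk groupoid homology `H_*(G)` -/

/-- The space `G^(n)` of composable `n`-tuples. -/
def Comps (n : ℕ) : Set (Fin n → G) :=
  {v | ∀ (j : Fin n) (h : (j : ℕ) + 1 < n), D.source (v j) = D.range (v ⟨(j : ℕ) + 1, h⟩)}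

/-- The face maps of Matui's complex on tuples:
`d_0` drops the first entry, `d_{n+1}` drops the last one, and the intermediate
`d_i` compose two consecutive entries. -/
def dface (n : ℕ) (i : Fin (n + 2)) (v : Fin (n + 1) → G) : Fin n → G := fun j =>
  if (j : ℕ) + 1 < (i : ℕ) then v j.castSucc
  else if (j : ℕ) + 1 = (i : ℕ) then D.mul (v j.castSucc) (v j.succ)
  else v j.succ

/-- The spaces of Matui's complex: `G^0` in degree `0`, and `G^(n)` in degree `n ≥ 1`. -/
def MSp : ℕ → Type u
  | 0 => ↥(D.unitSpace)
  | (n + 1) => ↥(D.Comps (n + 1))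

instance [TopologicalSpace G] (n : ℕ) : TopologicalSpace (D.MSp n) := by
  cases n with
  | zero => exact (inferInstance : TopologicalSpace ↥(D.unitSpace))
  | succ n => exact (inferInstance : TopologicalSpace ↥(D.Comps (n + 1)))

/-- The boundary maps of Matui's complex, given by alternating sums of pushforwards
along the face maps (in degree one, `∂₁ = s_* - r_*`). -/
def mBdry : (n : ℕ) → ((D.MSp (n + 1)) → ℤ) → (D.MSp n) → ℤ
  | 0, a => fun u =>
      (∑ᶠ x ∈ {x : ↥(D.Comps 1) | D.source (x.1 0) = u.1}, a x)
        - ∑ᶠ x ∈ {x : ↥(D.Comps 1) | D.range (x.1 0) = u.1}, a x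
  | (n + 1), a => fun y =>
      ∑ i : Fin (n + 3), (-1 : ℤ) ^ (i : ℕ) *
        ∑ᶠ x ∈ {x : ↥(D.Comps (n + 2)) | D.dface (n + 1) i x.1 = y.1}, a x

variable [TopologicalSpace G]

/-- The cycle subgroup of Matui's complex in degree `n`. -/
def mCycles : (n : ℕ) → AddSubgroup ((D.MSp n) → ℤ)
  | 0 => ccZSub (D.MSp 0)
  | (n + 1) => AddSubgroup.closure {a | a ∈ ccZ (D.MSp (n + 1)) ∧ D.mBdry n a = 0}

/-- The boundary subgroup of Matui's complex in degree `n`. -/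
def mBdries (n : ℕ) : AddSubgroup ((D.MSp n) → ℤ) :=
  AddSubgroup.closure {c | ∃ a ∈ ccZ (D.MSp (n + 1)), D.mBdry n a = c}

/-- The groupoid homology `H_n(G)` (Crainic–Moerdijk homology, computed by Matui's complex). -/
def Homology (n : ℕ) : Type u :=
  (D.mCycles n) ⧸ AddSubgroup.comap (D.mCycles n).subtype (D.mBdries n)

instance (n : ℕ) : AddCommGroup (D.Homology n) :=
  QuotientAddGroup.Quotient.addCommGroup _

/-- The homology class of a cycle. -/
def hcls {n : ℕ} (a : (D.MSp n) → ℤ) (ha : a ∈ D.mCycles n) : D.Homology n :=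
  QuotientAddGroup.mk ⟨a, ha⟩

end GroupoidData

/-! ### Algebra of augmented ordered chains -/

namespace OrdChain

/-- The boundary of an ordered simplex (augmented: in `Fin 0` there is one empty simplex). -/
def bd {P : Type*} {k : ℕ} (v : Fin (k + 1) → P) : (Fin k → P) →₀ ℤ :=
  ∑ i : Fin (k + 1), Finsupp.single (v ∘ i.succAbove) ((-1 : ℤ) ^ (i : ℕ))

/-- Linear extension of the boundary. -/
def bdL {P : Type*} {k : ℕ} : ((Fin (k + 1) → P) →₀ ℤ) →ₗ[ℤ] ((Fin k → P) →₀ ℤ) :=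
  Finsupp.linearCombination ℤ bd

/-- Cone with apex `p`. -/
def cone {P : Type*} {k : ℕ} (p : P) : ((Fin k → P) →₀ ℤ) →ₗ[ℤ] ((Fin (k + 1) → P) →₀ ℤ) :=
  Finsupp.lmapDomain ℤ ℤ (fun u : Fin k → P => (Fin.cons p u : Fin (k + 1) → P))

lemma bdL_single {P : Type*} {k : ℕ} (v : Fin (k + 1) → P) (c : ℤ) :
    bdL (Finsupp.single v c) = c • bd v := by
  simp [bdL]

lemma cone_single {P : Type*} {k : ℕ} (p : P) (v : Fin k → P) (c : ℤ) :
    cone p (Finsupp.single v c) = Finsupp.single (Fin.cons p v : Fin (k + 1) → P) c := by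
  simp [cone]

lemma bd_cons {P : Type*} {k : ℕ} (p : P) (u : Fin (k + 1) → P) :
    bd (Fin.cons p u : Fin (k + 2) → P) = Finsupp.single u 1 - cone p (bd u) := by
  unfold bd
  rw [Fin.sum_univ_succ, map_sum]
  have h0 : (Fin.cons p u : Fin (k + 2) → P) ∘ (0 : Fin (k + 2)).succAbove = u := by
    funext j; simp
  rw [h0, sub_eq_add_neg, ← Finset.sum_neg_distrib]
  congr 1
  refine Finset.sum_congr rfl fun i _ => ?_
  rw [cone_single, ← Finsupp.single_neg]
  congr 1
  · funext j
    refine Fin.cases ?_ (fun j => ?_) j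
    · simp
    · simp
  · simp [pow_succ]

lemma bdL_cone {P : Type*} {k : ℕ} (p : P) (z : (Fin (k + 1) → P) →₀ ℤ) :
    bdL (cone p z) = z - cone p (bdL z) := by
  induction z using Finsupp.induction_linear with
  | zero => simp
  | add f g hf hg => rw [map_add, map_add, hf, hg, map_add, map_add]; abel
  | single u c =>
    rw [cone_single, bdL_single, bdL_single, bd_cons, map_smul, smul_sub]
    simp

lemma bdL_cone_zero {P : Type*} (p : P) (z : (Fin 0 → P) →₀ ℤ) :
    bdL (cone p z) = z := by
  induction z using Finsupp.induction_linear with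
  | zero => simp
  | add f g hf hg => rw [map_add, map_add, hf, hg]
  | single u c =>
    rw [cone_single, bdL_single, bd]
    rw [Fin.sum_univ_one, Finsupp.smul_single]
    simp only [Fin.val_zero, pow_zero, smul_eq_mul, mul_one]
    congr 1

lemma bdL_bd {P : Type*} {k : ℕ} (v : Fin (k + 2) → P) : bdL (bd v) = 0 := by
  induction k with
  | zero =>
    rw [← Fin.cons_self_tail v, bd_cons, map_sub, bdL_cone_zero, bdL_single]
    simp
  | succ k ih =>
    rw [← Fin.cons_self_tail v, bd_cons, map_sub, bdL_cone, bdL_single, ih]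
    simp

lemma bdL_mapDomain {P Q : Type*} {k : ℕ} (q : P → Q) (z : (Fin (k + 1) → P) →₀ ℤ) :
    bdL (Finsupp.mapDomain (fun v => q ∘ v) z) = Finsupp.mapDomain (fun v => q ∘ v) (bdL z) := by
  induction z using Finsupp.induction_linear with
  | zero => simp
  | add f g hf hg => rw [Finsupp.mapDomain_add, map_add, hf, hg, map_add, Finsupp.mapDomain_add]
  | single u c =>
    rw [Finsupp.mapDomain_single, bdL_single, bdL_single, Finsupp.mapDomain_smul, bd, bd,
      Finsupp.mapDomain_finsetSum]
    simp only [Finsupp.mapDomain_single]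
    rfl

/-! #### The sorting chain map on the standard simplex -/

/-- The minor of a list of vectors along `I`. -/
def minor {k N : ℕ} (I : Fin k → Fin N) : (Fin N → ℤ) [⋀^Fin k]→ₗ[ℤ] ℤ :=
  (Matrix.detRowAlternating (n := Fin k) (R := ℤ)).compLinearMap (LinearMap.funLeft ℤ ℤ I)

/-- The finite set of increasing maps. -/
def incs (k N : ℕ) : Finset (Fin k → Fin N) := Finset.univ.filter StrictMono

/-- Sorting chain map as an alternating map. -/
def psiA (k N : ℕ) : (Fin N → ℤ) [⋀^Fin k]→ₗ[ℤ] ((Fin k → Fin N) →₀ ℤ) :=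
  ∑ I ∈ incs k N, (Finsupp.lsingle (R := ℤ) I).compAlternatingMap (minor I)

/-- The coefficient. -/
def coef {k N : ℕ} (κ I : Fin k → Fin N) : ℤ := minor I (fun j => Pi.single (κ j) 1)

/-- Sorting chain map on simplices. -/
def psiU {k N : ℕ} (κ : Fin k → Fin N) : (Fin k → Fin N) →₀ ℤ :=
  ∑ I ∈ incs k N, Finsupp.single I (coef κ I)

lemma psiA_apply {k N : ℕ} (κ : Fin k → Fin N) :
    psiA k N (fun j => Pi.single (κ j) 1) = psiU κ := by
  unfold psiA psiU coef
  generalize incs k N = s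
  induction s using Finset.induction_on with
  | empty => simp
  | insert a s ha ih =>
    rw [Finset.sum_insert ha, Finset.sum_insert ha, AlternatingMap.add_apply, ih]
    rfl

lemma coef_eq_det {k N : ℕ} (κ I : Fin k → Fin N) :
    coef κ I = Matrix.det (Matrix.of fun j l => (Pi.single (κ j) (1 : ℤ) : Fin N → ℤ) (I l)) := rfl

lemma coef_mem {k N : ℕ} {κ I : Fin k → Fin N} (h : coef κ I ≠ 0) (l : Fin k) :
    ∃ j, κ j = I l := by
  by_contra hc
  push Not at hc
  apply h
  rw [coef_eq_det]
  apply Matrix.det_eq_zero_of_column_eq_zero l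
  intro j
  simp only [Matrix.of_apply]
  exact Pi.single_eq_of_ne (hc j).symm _

lemma coef_mem' {k N : ℕ} {κ I : Fin k → Fin N} (h : coef κ I ≠ 0) (j : Fin k) :
    ∃ l, κ j = I l := by
  by_contra hc
  push Not at hc
  apply h
  rw [coef_eq_det]
  apply Matrix.det_eq_zero_of_row_eq_zero j
  intro l
  simp only [Matrix.of_apply]
  exact Pi.single_eq_of_ne (hc l).symm _

lemma psiU_strictMono {k N : ℕ} {J : Fin k → Fin N} (hJ : StrictMono J) :
    psiU J = Finsupp.single J 1 := by
  unfold psiU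
  rw [Finset.sum_eq_single J]
  · congr 1
    rw [coef_eq_det]
    rw [← Matrix.det_one (n := Fin k) (R := ℤ)]
    congr 1
    · ext j l
      simp only [Matrix.of_apply, Matrix.one_apply, Pi.single_apply, hJ.injective.eq_iff]
      by_cases h : j = l <;> simp [h, eq_comm]
  · intro I hI hne
    have hI' : StrictMono I := by simpa [incs] using hI
    have : coef J I = 0 := by
      by_contra h
      apply hne
      refine (StrictMono.range_inj hI' hJ).1 (subset_antisymm ?_ ?_)
      · rintro _ ⟨l, rfl⟩; obtain ⟨j, hj⟩ := coef_mem h l; exact ⟨j, hj⟩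
      · rintro _ ⟨l, rfl⟩; obtain ⟨j, hj⟩ := coef_mem' h l; exact ⟨j, hj.symm⟩
    simp [this]
  · intro h; exact absurd hJ (by simpa [incs] using h)

lemma psiU_big {k N : ℕ} (h : N < k) (κ : Fin k → Fin N) : psiU κ = 0 := by
  unfold psiU
  apply Finset.sum_eq_zero
  intro I hI
  have hI' : StrictMono I := by simpa [incs] using hI
  have := Fintype.card_le_of_injective I hI'.injective
  simp at this
  omega

lemma incs_big {k N : ℕ} (h : N < k) : incs k N = ∅ := by
  rw [Finset.eq_empty_iff_forall_notMem]
  intro I hI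
  have hI' : StrictMono I := by simpa [incs] using hI
  have := Fintype.card_le_of_injective I hI'.injective
  simp at this
  omega

/-- The augmentation. -/
def augm (N : ℕ) : (Fin N → ℤ) →ₗ[ℤ] ℤ := ∑ i, LinearMap.proj i

lemma augm_single {N : ℕ} (i : Fin N) : augm N (Pi.single i 1) = 1 := by
  simp [augm, Finset.sum_apply]

lemma psiU_chain {k N : ℕ} (κ : Fin (k + 1) → Fin N) :
    bdL (psiU κ) = ∑ i : Fin (k + 1), ((-1 : ℤ) ^ (i : ℕ)) • psiU (κ ∘ i.succAbove) := by
  have key : (bdL (P := Fin N) (k := k)).compAlternatingMap (psiA (k + 1) N)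
      = AlternatingMap.alternatizeUncurryFin ((augm N).smulRight (psiA k N)) := by
    refine Module.Basis.ext_alternating (Pi.basisFun ℤ (Fin N)) ?_
    intro κ hκ
    let σ := Tuple.sort κ
    have hm : StrictMono (κ ∘ σ) :=
      (Tuple.monotone_sort κ).strictMono_of_injective (hκ.comp σ.injective)
    have hκ' : (fun j => (Pi.basisFun ℤ (Fin N)) (κ j))
        = (fun j => (Pi.basisFun ℤ (Fin N)) ((κ ∘ σ) j)) ∘ (σ⁻¹ : Equiv.Perm _) := by
      funext j; simp
    rw [hκ', AlternatingMap.map_perm, AlternatingMap.map_perm]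
    congr 1
    generalize κ ∘ σ = J at hm
    rw [AlternatingMap.alternatizeUncurryFin_apply]
    simp only [LinearMap.compAlternatingMap_apply, Pi.basisFun_apply, LinearMap.smulRight_apply,
      AlternatingMap.smul_apply, augm_single, one_smul]
    rw [psiA_apply, psiU_strictMono hm, bdL_single, one_smul, bd]
    refine Finset.sum_congr rfl fun i _ => ?_
    have : i.removeNth (fun j => (Pi.single (J j) 1 : Fin N → ℤ))
        = fun j => Pi.single ((J ∘ i.succAbove) j) 1 := rfl
    rw [this, psiA_apply, psiU_strictMono (hm.comp (Fin.strictMono_succAbove i))]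
    simp
  have := congrArg (fun f => f (fun j => (Pi.single (κ j) 1 : Fin N → ℤ))) key
  simp only [LinearMap.compAlternatingMap_apply, AlternatingMap.alternatizeUncurryFin_apply,
    LinearMap.smulRight_apply, AlternatingMap.smul_apply, augm_single, one_smul, psiA_apply] at this
  rw [this]
  refine Finset.sum_congr rfl fun i _ => ?_
  have : i.removeNth (fun j => (Pi.single (κ j) 1 : Fin N → ℤ))
        = fun j => Pi.single ((κ ∘ i.succAbove) j) 1 := rfl
  rw [this, psiA_apply]

/-! #### The chain map and the homotopy on tuples of points -/

section pts

variable {P : Type*} {N : ℕ} (col : P → Fin N) (φ : P → P)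

/-- An index with a given colour if any. -/
def pick {k : ℕ} (κ : Fin k → Fin N) (i : Fin N) (l : Fin k) : Fin k :=
  if h : ∃ j, κ j = i then h.choose else l

lemma pick_spec {k : ℕ} {κ : Fin k → Fin N} {i : Fin N} (l : Fin k) (h : ∃ j, κ j = i) :
    κ (pick κ i l) = i := by
  unfold pick; rw [dif_pos h]; exact h.choose_spec

/-- The sorting chain map. -/
def psi {k : ℕ} (v : Fin k → P) : (Fin k → P) →₀ ℤ :=
  ∑ I ∈ incs k N, Finsupp.single (fun l => φ (v (pick (col ∘ v) (I l) l))) (coef (col ∘ v) I)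

/-- The chain homotopy. -/
def hom : (k : ℕ) → (Fin k → P) → ((Fin (k + 1) → P) →₀ ℤ)
  | 0, _ => 0
  | (k + 1), v => cone (v 0) (Finsupp.single v 1 - psi col φ v
      - ∑ i : Fin (k + 1), ((-1 : ℤ) ^ (i : ℕ)) • hom k (v ∘ i.succAbove))

/-- Points of the same colour have the same representative. -/
def Coh {k : ℕ} (v : Fin k → P) : Prop := ∀ i j, col (v i) = col (v j) → φ (v i) = φ (v j)

lemma Coh.comp {k m : ℕ} {v : Fin k → P} (h : Coh col φ v) (t : Fin m → Fin k) :
    Coh col φ (v ∘ t) := fun i j => h (t i) (t j)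

lemma psi_eq {k m : ℕ} {v : Fin k → P} (h : Coh col φ v) (t : Fin m → Fin k) (q : Fin N → P)
    (hq : ∀ j, q (col (v j)) = φ (v j)) :
    psi col φ (v ∘ t) = Finsupp.mapDomain (fun I => q ∘ I) (psiU (col ∘ v ∘ t)) := by
  unfold psi psiU
  rw [Finsupp.mapDomain_finsetSum]
  refine Finset.sum_congr rfl fun I _ => ?_
  rw [Finsupp.mapDomain_single]
  by_cases hc : coef (col ∘ v ∘ t) I = 0
  · rw [hc]; simp
  · congr 1
    funext l
    have := pick_spec l (coef_mem hc l)
    simp only [comp_apply] at this ⊢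
    rw [← hq]
    rw [this]

lemma psi_chain {k : ℕ} {v : Fin (k + 1) → P} (h : Coh col φ v) :
    bdL (psi col φ v) = ∑ i : Fin (k + 1), ((-1 : ℤ) ^ (i : ℕ)) • psi col φ (v ∘ i.succAbove) := by
  let q : Fin N → P := fun i => φ (v (pick (col ∘ v) i 0))
  have hq : ∀ j, q (col (v j)) = φ (v j) := by
    intro j
    apply h
    exact pick_spec (κ := col ∘ v) 0 ⟨j, rfl⟩
  have h1 := psi_eq col φ h id q hq
  rw [show v ∘ id = v from rfl] at h1
  rw [h1, bdL_mapDomain, psiU_chain, Finsupp.mapDomain_finsetSum]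
  refine Finset.sum_congr rfl fun i _ => ?_
  rw [psi_eq col φ h i.succAbove q hq, Finsupp.mapDomain_smul]
  rfl

lemma psi_zero (v : Fin 0 → P) : psi col φ v = Finsupp.single v 1 := by
  unfold psi
  have : incs 0 N = Finset.univ := by
    ext I; simp only [incs, Finset.mem_filter, Finset.mem_univ, true_and, iff_true]
    intro a; exact a.elim0
  rw [this, Finset.univ_unique, Finset.sum_singleton]
  congr 1
  · exact Subsingleton.elim _ _

lemma psi_big {k : ℕ} (h : N < k) (v : Fin k → P) : psi col φ v = 0 := by
  unfold psi; rw [incs_big h]; simp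

lemma sum_smul_bd {k : ℕ} {M : Type*} [AddCommGroup M] (B : (Fin k → P) → M)
    (v : Fin (k + 1) → P) :
    Finsupp.linearCombination ℤ B (bd v)
      = ∑ i : Fin (k + 1), ((-1 : ℤ) ^ (i : ℕ)) • B (v ∘ i.succAbove) := by
  unfold bd; simp [map_sum]

lemma hom_spec {k : ℕ} {v : Fin (k + 1) → P} (h : Coh col φ v) :
    bdL (hom col φ (k + 1) v)
      + Finsupp.linearCombination ℤ (hom col φ k) (bd v) = Finsupp.single v 1 - psi col φ v := by
  induction k with
  | zero =>
    rw [hom, bdL_cone]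
    simp only [map_sub, psi_chain col φ h, psi_zero, hom, bdL_single, sum_smul_bd]
    simp [bd]
  | succ k ih =>
    rw [hom, bdL_cone]
    have e : ∀ i : Fin (k + 2), bdL (hom col φ (k + 1) (v ∘ i.succAbove))
        = Finsupp.single (v ∘ i.succAbove) 1 - psi col φ (v ∘ i.succAbove)
          - Finsupp.linearCombination ℤ (hom col φ k) (bd (v ∘ i.succAbove)) := fun i => by
      rw [← ih (h.comp col φ _)]; abel
    have e2 : ∑ i : Fin (k + 2), ((-1 : ℤ) ^ (i : ℕ)) •
        Finsupp.linearCombination ℤ (hom col φ k) (bd (v ∘ i.succAbove)) = 0 := by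
      have := congrArg (Finsupp.linearCombination ℤ (hom col φ k)) (bdL_bd v)
      rw [bdL, sum_smul_bd, map_sum, map_zero] at this
      simpa only [map_smul] using this
    have e3 : ∑ i : Fin (k + 2), ((-1 : ℤ) ^ (i : ℕ)) • Finsupp.single (v ∘ i.succAbove) (1 : ℤ)
        = bd v := by simp [bd]
    have e4 : bdL (Finsupp.single v 1 - psi col φ v - ∑ i : Fin (k + 1 + 1),
        ((-1 : ℤ) ^ (i : ℕ)) • hom col φ (k + 1) (v ∘ i.succAbove)) = 0 := by
      rw [map_sub, map_sub, map_sum]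
      simp only [map_smul, e, smul_sub, Finset.sum_sub_distrib]
      rw [e2, e3, psi_chain col φ h, bdL_single]
      simp
    rw [e4, map_zero, sub_zero, sum_smul_bd]
    abel

end pts

end OrdChain

/-! ### Kernels acting on functions -/

namespace OrdChain

/-- The action of a kernel on a function (pointwise finite sums). -/
def act {X Y : Type*} (A : X → (Y →₀ ℤ)) (f : X → ℤ) (y : Y) : ℤ := ∑ᶠ x, f x * A x y

/-- Finiteness of the sums defining `act`. -/
def Fib {X Y : Type*} (A : X → (Y →₀ ℤ)) (f : X → ℤ) : Prop :=
  ∀ y, {x | f x ≠ 0 ∧ A x y ≠ 0}.Finite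

lemma Fib.supp {X Y : Type*} {A : X → (Y →₀ ℤ)} {f : X → ℤ} (h : Fib A f) (y : Y) :
    (support fun x => f x * A x y).Finite :=
  (h y).subset fun x hx => by
    simp only [mem_support, ne_eq, mul_eq_zero, not_or] at hx; exact hx

lemma act_zero {X Y : Type*} (A : X → (Y →₀ ℤ)) : act A 0 = 0 := by
  funext y; simp [act]

lemma act_add_right {X Y : Type*} {A : X → (Y →₀ ℤ)} {f g : X → ℤ} (hf : Fib A f) (hg : Fib A g) :
    act A (f + g) = act A f + act A g := by
  funext y
  simp only [act, Pi.add_apply, add_mul]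
  exact finsum_add_distrib (hf.supp y) (hg.supp y)

lemma act_smul_right {X Y : Type*} (A : X → (Y →₀ ℤ)) (f : X → ℤ) (n : ℤ) :
    act A (n • f) = n • act A f := by
  funext y
  simp only [act, Pi.smul_apply, smul_eq_mul, mul_assoc]
  rw [mul_finsum]

lemma act_add_left {X Y : Type*} {A B : X → (Y →₀ ℤ)} {f : X → ℤ} (hf : Fib A f) (hg : Fib B f) :
    act (fun x => A x + B x) f = act A f + act B f := by
  funext y
  simp only [act, Pi.add_apply, Finsupp.add_apply, mul_add]
  exact finsum_add_distrib (hf.supp y) (hg.supp y)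

lemma act_sub_left {X Y : Type*} {A B : X → (Y →₀ ℤ)} {f : X → ℤ} (hf : Fib A f) (hg : Fib B f) :
    act (fun x => A x - B x) f = act A f - act B f := by
  funext y
  simp only [act, Pi.sub_apply, Finsupp.sub_apply, mul_sub]
  exact finsum_sub_distrib (hf.supp y) (hg.supp y)

lemma act_congr {X Y : Type*} {A B : X → (Y →₀ ℤ)} {f : X → ℤ} (h : ∀ x, f x ≠ 0 → A x = B x) :
    act A f = act B f := by
  funext y
  refine finsum_congr fun x => ?_
  by_cases hx : f x = 0
  · simp [hx]
  · rw [h x hx]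

lemma act_single {X : Type*} (f : X → ℤ) : act (fun x => Finsupp.single x 1) f = f := by
  funext y
  unfold act
  rw [finsum_eq_single _ y]
  · simp
  · intro x hx; simp [Finsupp.single_apply, hx]

lemma fib_single {X : Type*} (f : X → ℤ) : Fib (fun x => Finsupp.single x (1 : ℤ)) f := by
  intro y
  refine (Set.finite_singleton y).subset ?_
  rintro x ⟨_, h⟩
  by_contra hx
  exact h (by simp [Finsupp.single_apply]; exact hx)

/-- Composition of kernels. -/
def kcomp {X Y Z : Type*} (B : Y → (Z →₀ ℤ)) (A : X → (Y →₀ ℤ)) (x : X) : Z →₀ ℤ :=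
  Finsupp.linearCombination ℤ B (A x)

lemma kcomp_apply {X Y Z : Type*} (B : Y → (Z →₀ ℤ)) (A : X → (Y →₀ ℤ)) (x : X) (z : Z) :
    kcomp B A x z = ∑ᶠ y, A x y * B y z := by
  unfold kcomp
  rw [Finsupp.linearCombination_apply, Finsupp.sum, Finset.sum_apply']
  rw [finsum_eq_sum_of_support_subset]
  · rfl
  · intro y hy
    simp only [mem_support, ne_eq, mul_eq_zero, not_or] at hy
    simp [hy.1]

/-- Finiteness condition for compositions. -/
lemma kcomp_fin {X Y Z : Type*} {B : Y → (Z →₀ ℤ)} {A : X → (Y →₀ ℤ)} {f : X → ℤ}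
    (hA : Fib A f) {S : Set Y} (hS : ∀ x, f x ≠ 0 → ∀ y, A x y ≠ 0 → y ∈ S)
    (hB : ∀ z, {y | y ∈ S ∧ B y z ≠ 0}.Finite) (z : Z) :
    {p : X × Y | f p.1 ≠ 0 ∧ A p.1 p.2 ≠ 0 ∧ B p.2 z ≠ 0}.Finite := by
  have : (⋃ y ∈ {y | y ∈ S ∧ B y z ≠ 0}, (fun x => (x, y)) '' {x | f x ≠ 0 ∧ A x y ≠ 0}).Finite :=
    (hB z).biUnion fun y _ => (hA y).image _
  refine this.subset ?_
  rintro ⟨x, y⟩ ⟨h1, h2, h3⟩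
  simp only [mem_iUnion]
  exact ⟨y, ⟨hS x h1 y h2, h3⟩, x, ⟨h1, h2⟩, rfl⟩

lemma fib_kcomp {X Y Z : Type*} {B : Y → (Z →₀ ℤ)} {A : X → (Y →₀ ℤ)} {f : X → ℤ}
    (hA : Fib A f) {S : Set Y} (hS : ∀ x, f x ≠ 0 → ∀ y, A x y ≠ 0 → y ∈ S)
    (hB : ∀ z, {y | y ∈ S ∧ B y z ≠ 0}.Finite) : Fib (kcomp B A) f := by
  intro z
  refine ((kcomp_fin hA hS hB z).image Prod.fst).subset ?_
  rintro x ⟨h1, h2⟩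
  rw [kcomp_apply] at h2
  obtain ⟨y, hy⟩ : ∃ y, A x y * B y z ≠ 0 := by
    by_contra hc
    push Not at hc
    exact h2 (by simp [hc])
  simp only [ne_eq, mul_eq_zero, not_or] at hy
  exact ⟨(x, y), ⟨h1, hy.1, hy.2⟩, rfl⟩

lemma act_kcomp {X Y Z : Type*} {B : Y → (Z →₀ ℤ)} {A : X → (Y →₀ ℤ)} {f : X → ℤ}
    (hA : Fib A f) {S : Set Y} (hS : ∀ x, f x ≠ 0 → ∀ y, A x y ≠ 0 → y ∈ S)
    (hB : ∀ z, {y | y ∈ S ∧ B y z ≠ 0}.Finite) :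
    act (kcomp B A) f = act B (act A f) := by
  funext z
  have hfin := kcomp_fin hA hS hB z
  let F : X → Y → ℤ := fun x y => f x * A x y * B y z
  have hF : (support (uncurry F)).Finite := hfin.subset (by
    rintro ⟨x, y⟩ h
    simp only [F, mem_support, uncurry, ne_eq, mul_eq_zero, not_or] at h
    exact ⟨h.1.1, h.1.2, h.2⟩)
  have h1 : act (kcomp B A) f z = ∑ᶠ x, ∑ᶠ y, F x y := by
    refine finsum_congr fun x => ?_
    rw [kcomp_apply, mul_finsum]
    simp only [F, mul_assoc]
  have h2 : act B (act A f) z = ∑ᶠ y, ∑ᶠ x, F x y := by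
    refine finsum_congr fun y => ?_
    unfold act
    rw [finsum_mul]
  have hF' : (support (uncurry fun y x => F x y)).Finite := by
    refine (hF.image Prod.swap).subset ?_
    rintro ⟨y, x⟩ h
    exact ⟨(x, y), h, rfl⟩
  rw [h1, h2]
  have e1 := finsum_curry (uncurry F) hF
  have e2 := finsum_curry (uncurry fun y x => F x y) hF'
  simp only [uncurry] at e1 e2
  rw [← e1, ← e2]
  exact finsum_comp_equiv (Equiv.prodComm X Y) (f := fun p : Y × X => F p.2 p.1)

/-! #### Kernels given by words -/

section words

variable {P : Type*} {N : ℕ} (col : P → Fin N) (φ : P → P)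

/-- Evaluation of a letter. -/
def ev {k : ℕ} (v : Fin k → P) (l : Fin k × Bool) : P := if l.2 = true then φ (v l.1) else v l.1

/-- Kernels which are given by universal formulas in words. -/
def Rep {k m : ℕ} (A : (Fin k → P) → ((Fin m → P) →₀ ℤ)) : Prop :=
  ∃ W : (Fin k → Fin N) → (Fin m → Fin k × Bool) → ℤ,
    ∀ v, A v = ∑ w, Finsupp.single (ev φ v ∘ w) (W (col ∘ v) w)

variable {col φ}

lemma Rep.of {k m : ℕ} {A : (Fin k → P) → ((Fin m → P) →₀ ℤ)} {ι : Type*} (s : Finset ι)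
    (w : ι → (Fin k → Fin N) → (Fin m → Fin k × Bool)) (c : ι → (Fin k → Fin N) → ℤ)
    (h : ∀ v, A v = ∑ i ∈ s, Finsupp.single (ev φ v ∘ w i (col ∘ v)) (c i (col ∘ v))) :
    Rep col φ A := by
  refine ⟨fun κ w0 => ∑ i ∈ s, if w i κ = w0 then c i κ else 0, fun v => ?_⟩
  rw [h v]
  have : ∀ w0 : Fin m → Fin k × Bool, Finsupp.single (ev φ v ∘ w0)
      (∑ i ∈ s, if w i (col ∘ v) = w0 then c i (col ∘ v) else 0)
      = ∑ i ∈ s, if w i (col ∘ v) = w0 then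
          Finsupp.single (ev φ v ∘ w0) (c i (col ∘ v)) else 0 := by
    intro w0
    rw [Finsupp.single_finsetSum]
    refine Finset.sum_congr rfl fun i _ => ?_
    split_ifs <;> simp
  simp only [this]
  rw [Finset.sum_comm]
  refine Finset.sum_congr rfl fun i _ => ?_
  rw [Finset.sum_ite_eq]
  simp

lemma Rep.add {k m : ℕ} {A B : (Fin k → P) → ((Fin m → P) →₀ ℤ)} (hA : Rep col φ A)
    (hB : Rep col φ B) : Rep col φ (fun v => A v + B v) := by
  obtain ⟨W, hW⟩ := hA
  obtain ⟨V, hV⟩ := hB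
  refine ⟨fun κ w => W κ w + V κ w, fun v => ?_⟩
  beta_reduce
  rw [hW, hV, ← Finset.sum_add_distrib]
  simp

lemma Rep.smul {k m : ℕ} {A : (Fin k → P) → ((Fin m → P) →₀ ℤ)} (hA : Rep col φ A)
    (n : ℤ) : Rep col φ (fun v => n • A v) := by
  obtain ⟨W, hW⟩ := hA
  refine ⟨fun κ w => n * W κ w, fun v => ?_⟩
  beta_reduce
  rw [hW, Finset.smul_sum]
  simp

lemma Rep.sub {k m : ℕ} {A B : (Fin k → P) → ((Fin m → P) →₀ ℤ)} (hA : Rep col φ A)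
    (hB : Rep col φ B) : Rep col φ (fun v => A v - B v) := by
  have := hA.add (hB.smul (-1))
  simpa [sub_eq_add_neg] using this

lemma Rep.zero {k m : ℕ} : Rep col φ (fun _ => 0 : (Fin k → P) → ((Fin m → P) →₀ ℤ)) :=
  ⟨fun _ _ => 0, fun v => by simp⟩

lemma Rep.sum {k m : ℕ} {ι : Type*} (s : Finset ι) {A : ι → (Fin k → P) → ((Fin m → P) →₀ ℤ)}
    (hA : ∀ i, Rep col φ (A i)) : Rep col φ (fun v => ∑ i ∈ s, A i v) := by
  induction s using Finset.induction_on with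
  | empty => simpa using Rep.zero
  | insert a s ha ih =>
    simp only [Finset.sum_insert ha]
    exact (hA a).add ih

lemma Rep.face {k l m : ℕ} {A : (Fin l → P) → ((Fin m → P) →₀ ℤ)} (hA : Rep col φ A)
    (t : Fin l → Fin k) : Rep col φ (fun v : Fin k → P => A (v ∘ t)) := by
  obtain ⟨W, hW⟩ := hA
  refine Rep.of (ι := Fin m → Fin l × Bool) Finset.univ
    (fun w _ => fun j => (t (w j).1, (w j).2)) (fun w κ => W (κ ∘ t) w) fun v => ?_
  beta_reduce
  rw [hW]
  rfl

lemma Rep.cone {k m : ℕ} {A : (Fin (k + 1) → P) → ((Fin m → P) →₀ ℤ)} (hA : Rep col φ A) :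
    Rep col φ (fun v => OrdChain.cone (v 0) (A v)) := by
  obtain ⟨W, hW⟩ := hA
  refine Rep.of (ι := Fin m → Fin (k + 1) × Bool) Finset.univ
    (fun w _ => (Fin.cons (0, false) w : Fin (m + 1) → Fin (k + 1) × Bool))
    (fun w κ => W κ w) fun v => ?_
  beta_reduce
  rw [hW, map_sum]
  refine Finset.sum_congr rfl fun w _ => ?_
  rw [cone_single]
  congr 1
  funext j
  refine Fin.cases ?_ (fun j => ?_) j
  · simp [ev]
  · simp

lemma Rep.face_single {k m : ℕ} (t : Fin m → Fin k) (n : ℤ) :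
    Rep col φ (fun v : Fin k → P => Finsupp.single (v ∘ t) n) := by
  refine Rep.of (ι := Unit) Finset.univ (fun _ _ => fun j => (t j, false)) (fun _ _ => n) fun v => ?_
  simp
  rfl

lemma rep_bd {k : ℕ} : Rep col φ (bd (P := P) (k := k)) := by
  unfold bd
  exact Rep.sum _ fun i => Rep.face_single _ _

lemma rep_psi {k : ℕ} : Rep col φ (psi col φ (k := k)) := by
  refine Rep.of (incs k N) (fun I κ => fun l => (pick κ (I l) l, true)) (fun I κ => coef κ I) ?_
  intro v
  unfold psi
  refine Finset.sum_congr rfl fun I _ => ?_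
  congr 1

lemma rep_hom {k : ℕ} : Rep col φ (hom col φ k) := by
  induction k with
  | zero => exact Rep.zero
  | succ k ih =>
    have : hom col φ (k + 1) = fun v => OrdChain.cone (v 0) (Finsupp.single v 1 - psi col φ v
      - ∑ i : Fin (k + 1), ((-1 : ℤ) ^ (i : ℕ)) • hom col φ k (v ∘ i.succAbove)) := rfl
    rw [this]
    refine Rep.cone (Rep.sub (Rep.sub (Rep.face_single id 1) rep_psi) ?_)
    exact Rep.sum _ fun i => (ih.face _).smul _

end words

end OrdChain

/-! ### Pushing forward along local homeomorphisms -/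

namespace OrdChain

open Topology

lemma ccZ_support_clopen {X : Type*} [TopologicalSpace X] {a : X → ℤ} (h : a ∈ ccZ X) :
    IsClopen (support a) := by
  have : support a = a ⁻¹' {0}ᶜ := by ext; simp
  rw [this]
  exact (isClopen_discrete _).preimage h.1

lemma ccZ_support_compact {X : Type*} [TopologicalSpace X] {a : X → ℤ} (h : a ∈ ccZ X) :
    IsCompact (support a) := by
  have := h.2
  rwa [HasCompactSupport, tsupport, (ccZ_support_clopen h).1.closure_eq] at this

lemma ccZ_mul {X : Type*} [TopologicalSpace X] {a c : X → ℤ} (h : a ∈ ccZ X)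
    (hc : ContinuousOn c (support a)) : (fun x => a x * c x) ∈ ccZ X := by
  have hcl := ccZ_support_clopen h
  refine ⟨?_, h.2.mul_right⟩
  rw [continuous_iff_continuousAt]
  intro x
  by_cases hx : x ∈ support a
  · exact h.1.continuousAt.mul (hc.continuousAt (hcl.2.mem_nhds hx))
  · have : (fun x => a x * c x) =ᶠ[𝓝 x] fun _ => 0 := by
      filter_upwards [hcl.1.isOpen_compl.mem_nhds hx] with z hz
      simp only [mem_compl_iff, mem_support, not_not] at hz
      simp [hz]
    exact continuousAt_const.congr this.symm

/-- Pushforward of functions. -/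
def push {X Y : Type*} (θ : X → Y) (a : X → ℤ) (y : Y) : ℤ := ∑ᶠ x, if θ x = y then a x else 0

/-- Pushforward is well behaved. -/
def PushGood {X Y : Type*} [TopologicalSpace Y] (θ : X → Y) (a : X → ℤ) : Prop :=
  push θ a ∈ ccZ Y ∧ ∀ y, {x | a x ≠ 0 ∧ θ x = y}.Finite

lemma push_supp {X Y : Type*} {θ : X → Y} {a : X → ℤ} {y : Y}
    (h : {x | a x ≠ 0 ∧ θ x = y}.Finite) : (support fun x => if θ x = y then a x else 0).Finite :=
  h.subset fun x hx => by
    simp only [mem_support, ne_eq, ite_eq_right_iff, Classical.not_imp] at hx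
    exact ⟨hx.2, hx.1⟩

lemma PushGood.add {X Y : Type*} [TopologicalSpace Y] {θ : X → Y} {a b : X → ℤ}
    (ha : PushGood θ a) (hb : PushGood θ b) : PushGood θ (a + b) := by
  refine ⟨?_, fun y => ((ha.2 y).union (hb.2 y)).subset ?_⟩
  · have : push θ (a + b) = push θ a + push θ b := by
      funext y
      simp only [push, Pi.add_apply]
      rw [← finsum_add_distrib (push_supp (ha.2 y)) (push_supp (hb.2 y))]
      refine finsum_congr fun x => ?_
      split_ifs <;> simp
    rw [this]
    exact (ccZSub Y).add_mem ha.1 hb.1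
  · rintro x ⟨h1, h2⟩
    by_cases h : a x = 0
    · right; refine ⟨fun hb0 => h1 (by simp [h, hb0]), h2⟩
    · left; exact ⟨h, h2⟩

lemma pushGood_of_inj {X Y : Type*} [TopologicalSpace X] [TopologicalSpace Y] [T2Space Y]
    (e : OpenPartialHomeomorph X Y) {B : Set X} (hB : IsCompact B) (hBo : IsOpen B)
    (hBe : B ⊆ e.source) {a : X → ℤ} (ha : a ∈ ccZ X) (hs : support a ⊆ B) : PushGood e a := by
  have hfin : ∀ y, {x | a x ≠ 0 ∧ e x = y}.Finite := by
    intro y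
    apply Set.Subsingleton.finite
    rintro x ⟨h1, h2⟩ z ⟨h3, h4⟩
    exact e.injOn (hBe (hs h1)) (hBe (hs h3)) (h2.trans h4.symm)
  have hval : ∀ x ∈ B, push e a (e x) = a x := by
    intro x hx
    unfold push
    rw [finsum_eq_single _ x]
    · simp
    · intro z hz
      by_cases hza : a z = 0
      · simp [hza]
      · rw [if_neg]
        intro h
        exact hz (e.injOn (hBe (hs hza)) (hBe hx) h)
  have hval0 : ∀ y, y ∉ e '' B → push e a y = 0 := by
    intro y hy
    unfold push
    apply finsum_eq_zero_of_forall_eq_zero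
    intro x
    split_ifs with h
    · by_contra hx
      exact hy ⟨x, hs hx, h⟩
    · rfl
  have hC : IsCompact (e '' B) := hB.image_of_continuousOn (e.continuousOn.mono hBe)
  have hO : IsOpen (e '' B) := e.isOpen_image_of_subset_source hBo hBe
  refine ⟨⟨?_, ?_⟩, hfin⟩
  · rw [continuous_iff_continuousAt]
    intro y
    by_cases hy : y ∈ e '' B
    · have : push e a =ᶠ[𝓝 y] a ∘ e.symm := by
        filter_upwards [hO.mem_nhds hy]
        rintro _ ⟨x, hx, rfl⟩
        rw [hval x hx, comp_apply, e.left_inv (hBe hx)]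
      refine ContinuousAt.congr ?_ this.symm
      obtain ⟨x, hx, rfl⟩ := hy
      exact ha.1.continuousAt.comp (e.continuousAt_symm (e.map_source (hBe hx)))
    · have : push e a =ᶠ[𝓝 y] fun _ => 0 := by
        filter_upwards [hC.isClosed.isOpen_compl.mem_nhds hy] with z hz
        exact hval0 z hz
      exact continuousAt_const.congr this.symm
  · exact HasCompactSupport.intro hC fun y hy => hval0 y hy

/-- A space with a basis of compact open sets. -/
def CoBasis (X : Type*) [TopologicalSpace X] : Prop :=
  ∀ (x : X) (U : Set X), IsOpen U → x ∈ U → ∃ B, x ∈ B ∧ B ⊆ U ∧ IsOpen B ∧ IsCompact B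

lemma pushGood {X Y : Type*} [TopologicalSpace X] [T2Space X] [TopologicalSpace Y] [T2Space Y]
    (hX : CoBasis X) {θ : X → Y} {W : Set X} (hW : IsOpen W) (hθ : IsLocalHomeomorphOn θ W)
    {a : X → ℤ} (ha : a ∈ ccZ X) (hs : support a ⊆ W) : PushGood θ a := by
  have key : ∃ B : Set X, IsCompact B ∧ IsOpen B ∧ support a ⊆ B ∧
      ∀ a ∈ ccZ X, support a ⊆ B → PushGood θ a := by
    refine (ccZ_support_compact ha).induction_on
      (p := fun t => ∃ B : Set X, IsCompact B ∧ IsOpen B ∧ t ⊆ B ∧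
        ∀ a ∈ ccZ X, support a ⊆ B → PushGood θ a) ?_ ?_ ?_ ?_
    · refine ⟨∅, isCompact_empty, isOpen_empty, subset_rfl, fun a ha h => ?_⟩
      have h0 : a = 0 := by
        rw [subset_empty_iff, support_eq_empty_iff] at h; exact h
      subst h0
      refine ⟨?_, fun y => by simp⟩
      have : push θ 0 = 0 := by funext y; simp [push]
      rw [this]; exact (ccZSub Y).zero_mem
    · rintro s t hst ⟨B, h1, h2, h3, h4⟩
      exact ⟨B, h1, h2, hst.trans h3, h4⟩
    · rintro s t ⟨B, h1, h2, h3, h4⟩ ⟨C, k1, k2, k3, k4⟩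
      refine ⟨B ∪ C, h1.union k1, h2.union k2, union_subset_union h3 k3, fun a ha hs => ?_⟩
      have hBc : IsClopen B := ⟨h1.isClosed, h2⟩
      let c : X → ℤ := fun x => if x ∈ B then 1 else 0
      have hc : Continuous c := by
        have : IsLocallyConstant c := by
          rw [IsLocallyConstant.iff_exists_open]
          intro x
          by_cases hx : x ∈ B
          · exact ⟨B, h2, hx, fun y hy => by simp [c, hx, hy]⟩
          · exact ⟨Bᶜ, hBc.1.isOpen_compl, hx, fun y hy => by
              have hy' : y ∉ B := hy
              simp [c, hx, hy']⟩
        exact this.continuous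
      have e : a = (fun x => a x * c x) + fun x => a x * (1 - c x) := by
        funext x; simp only [Pi.add_apply]; ring
      rw [e]
      refine PushGood.add (h4 _ (ccZ_mul ha hc.continuousOn) ?_)
        (k4 _ (ccZ_mul ha (continuous_const.sub hc).continuousOn) ?_)
      · intro x hx
        by_contra hxB
        apply hx; simp [c, hxB]
      · intro x hx
        have hxB : x ∉ B := fun hxB => hx (by simp [c, hxB])
        have hxa : x ∈ support a := fun h => hx (by simp [h])
        exact (hs hxa).resolve_left hxB
    · intro x hx
      obtain ⟨e, hxe, rfl⟩ := hθ x (hs hx)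
      obtain ⟨B, hxB, hBU, hBo, hBc⟩ := hX x _ (e.open_source) hxe
      exact ⟨B, mem_nhdsWithin_of_mem_nhds (hBo.mem_nhds hxB), B, hBc, hBo, subset_rfl,
        fun a ha hs => pushGood_of_inj e hBc hBo hBU ha hs⟩
  obtain ⟨B, _, _, h3, h4⟩ := key
  exact h4 a ha h3

/-- Finite fibres over compact sets. -/
lemma finite_fibre {X Y : Type*} [TopologicalSpace X] [TopologicalSpace Y]
    {θ : X → Y} {C : Set X} (hC : IsCompact C) (hθ : IsLocalHomeomorphOn θ C) (y : Y) :
    {x | x ∈ C ∧ θ x = y}.Finite := by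
  have : ∀ x ∈ C, ∃ t ∈ 𝓝[C] x, {x | x ∈ t ∧ θ x = y}.Finite := by
    intro x hx
    obtain ⟨e, hxe, rfl⟩ := hθ x hx
    refine ⟨e.source, mem_nhdsWithin_of_mem_nhds (e.open_source.mem_nhds hxe), ?_⟩
    apply Set.Subsingleton.finite
    rintro x ⟨h1, h2⟩ z ⟨h3, h4⟩
    exact e.injOn h1 h3 (h2.trans h4.symm)
  refine hC.induction_on (p := fun t => {x | x ∈ t ∧ θ x = y}.Finite) (by simp) ?_ ?_ this
  · intro s t hst h
    exact h.subset fun x hx => ⟨hst hx.1, hx.2⟩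
  · intro s t hs ht
    refine (hs.union ht).subset ?_
    rintro x ⟨h1 | h1, h2⟩
    · exact Or.inl ⟨h1, h2⟩
    · exact Or.inr ⟨h1, h2⟩

end OrdChain

/-! ### Basic facts on principal ample groupoids -/

namespace OrdChain

open Topology

variable {G : Type u} {D : GroupoidData G}

/-- Two units are related if there is an arrow between them. -/
def Rl (D : GroupoidData G) (a b : G) : Prop := ∃ g, D.range g = a ∧ D.source g = b

/-- The arrow between two related units. -/
def arr (D : GroupoidData G) (a b : G) : G := if h : Rl D a b then h.choose else a

lemma range_arr {a b : G} (h : Rl D a b) : D.range (arr D a b) = a := by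
  unfold arr; rw [dif_pos h]; exact h.choose_spec.1

lemma source_arr {a b : G} (h : Rl D a b) : D.source (arr D a b) = b := by
  unfold arr; rw [dif_pos h]; exact h.choose_spec.2

/-- The points of a composable tuple. -/
def pt : (n : ℕ) → D.MSp n → Fin (n + 1) → G
  | 0, u => fun _ => u.1
  | (_ + 1), x => Fin.cons (D.range (x.1 0)) (fun j => D.source (x.1 j))

variable [TopologicalSpace G] (hA : D.IsAmpleGroupoid) (hP : D.IsPrincipal)

lemma source_continuous (hA : D.IsAmpleGroupoid) : Continuous D.source := hA.etale_source.continuous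

lemma range_continuous (hA : D.IsAmpleGroupoid) : Continuous D.range := hA.etale_range.continuous

lemma arrow_uniq (hA : D.IsAmpleGroupoid) (hP : D.IsPrincipal) {g h : G} (hr : D.range g = D.range h) (hs : D.source g = D.source h) :
    g = h := by
  have c1 : D.source (D.inv g) = D.range h := by rw [hA.source_inv, hr]
  have h1 : D.mul (D.inv g) h ∈ D.unitSpace := by
    apply hP
    rw [hA.source_mul _ _ c1, hA.range_mul _ _ c1, hA.range_inv, hs]
  have h2 : D.mul (D.inv g) h = D.source g := by
    rw [← hA.range_unit _ h1, hA.range_mul _ _ c1, hA.range_inv]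
  have h3 : D.mul g (D.mul (D.inv g) h) = h := by
    rw [← hA.mul_assoc g (D.inv g) h (hA.range_inv g).symm c1, hA.mul_inv, hr, hA.unit_mul]
  rw [h2, hA.mul_unit] at h3
  exact h3

lemma arr_eq (hA : D.IsAmpleGroupoid) (hP : D.IsPrincipal) {a b g : G} (hr : D.range g = a) (hs : D.source g = b) : arr D a b = g := by
  have h : Rl D a b := ⟨g, hr, hs⟩
  exact arrow_uniq hA hP ((range_arr h).trans hr.symm) ((source_arr h).trans hs.symm)

lemma Rl.unit_left (hA : D.IsAmpleGroupoid) {a b : G} (h : Rl D a b) : a ∈ D.unitSpace := by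
  obtain ⟨g, rfl, rfl⟩ := h; exact hA.range_mem g

lemma Rl.refl (hA : D.IsAmpleGroupoid) {a : G} (h : a ∈ D.unitSpace) : Rl D a a := ⟨a, hA.range_unit a h, hA.source_unit a h⟩

lemma Rl.symm (hA : D.IsAmpleGroupoid) {a b : G} (h : Rl D a b) : Rl D b a := by
  obtain ⟨g, rfl, rfl⟩ := h; exact ⟨D.inv g, hA.range_inv g, hA.source_inv g⟩

lemma Rl.trans (hA : D.IsAmpleGroupoid) {a b c : G} (h : Rl D a b) (h' : Rl D b c) : Rl D a c := by
  obtain ⟨g, rfl, rfl⟩ := h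
  obtain ⟨k, hk, rfl⟩ := h'
  exact ⟨D.mul g k, hA.range_mul _ _ hk.symm, hA.source_mul _ _ hk.symm⟩

lemma arr_self (hA : D.IsAmpleGroupoid) (hP : D.IsPrincipal) {a : G} (h : a ∈ D.unitSpace) : arr D a a = a :=
  arr_eq hA hP (hA.range_unit a h) (hA.source_unit a h)

lemma arr_trans (hA : D.IsAmpleGroupoid) (hP : D.IsPrincipal) {a b c g k : G} (h1 : D.range g = a) (h2 : D.source g = b) (h3 : D.range k = b)
    (h4 : D.source k = c) : arr D a c = D.mul g k := by
  have : D.source g = D.range k := h2.trans h3.symm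
  exact arr_eq hA hP ((hA.range_mul _ _ this).trans h1) ((hA.source_mul _ _ this).trans h4)

lemma arr_inv_mul (hA : D.IsAmpleGroupoid) (hP : D.IsPrincipal) {a b c g k : G} (h1 : D.range g = a) (h2 : D.source g = b) (h3 : D.range k = a)
    (h4 : D.source k = c) : arr D b c = D.mul (D.inv g) k :=
  arr_trans hA hP (b := a) ((hA.range_inv g).trans h2) ((hA.source_inv g).trans h1) h3 h4

lemma mul_continuousOn (hA : D.IsAmpleGroupoid) {X : Type*} [TopologicalSpace X] {f g : X → G} {S : Set X}
    (hf : ContinuousOn f S) (hg : ContinuousOn g S) (h : ∀ x ∈ S, D.source (f x) = D.range (g x)) :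
    ContinuousOn (fun x => D.mul (f x) (g x)) S := by
  rw [continuousOn_iff_continuous_domRestrict] at *
  have : Continuous (fun x : S => (⟨(f x, g x), h x x.2⟩ :
      {p : G × G // D.source p.1 = D.range p.2})) :=
    Continuous.subtype_mk (hf.prodMk hg) _
  exact hA.continuous_mul.comp this

lemma range_pt (hA : D.IsAmpleGroupoid) {n : ℕ} (x : D.MSp (n + 1)) (j : Fin (n + 1)) :
    D.range (x.1 j) = pt (n + 1) x j.castSucc := by
  refine Fin.cases ?_ (fun j => ?_) j
  · rfl
  · have h1 : pt (n + 1) x (Fin.castSucc j.succ) = D.source (x.1 j.castSucc) := by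
      rw [Fin.castSucc_succ]; rfl
    rw [h1]
    have := x.2 j.castSucc (by simp)
    rw [this]
    rfl

lemma source_pt {n : ℕ} (x : D.MSp (n + 1)) (j : Fin (n + 1)) :
    D.source (x.1 j) = pt (n + 1) x j.succ := rfl

lemma pt_Rl_zero (hA : D.IsAmpleGroupoid) {n : ℕ} (x : D.MSp n) (i : Fin (n + 1)) : Rl D (pt n x 0) (pt n x i) := by
  cases n with
  | zero =>
    have : i = 0 := Fin.ext (by omega)
    subst this
    exact Rl.refl hA x.2
  | succ n =>
    induction i using Fin.induction with
    | zero => exact Rl.refl hA (hA.range_mem _)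
    | succ i ih => exact ih.trans hA ⟨x.1 i, range_pt hA x i, source_pt x i⟩

lemma pt_Rl (hA : D.IsAmpleGroupoid) {n : ℕ} (x : D.MSp n) (i j : Fin (n + 1)) : Rl D (pt n x i) (pt n x j) :=
  ((pt_Rl_zero hA x i).symm hA).trans hA (pt_Rl_zero hA x j)

lemma pt_unit (hA : D.IsAmpleGroupoid) {n : ℕ} (x : D.MSp n) (i : Fin (n + 1)) : pt n x i ∈ D.unitSpace :=
  (pt_Rl hA x i i).unit_left hA

lemma pt_arr (hA : D.IsAmpleGroupoid) (hP : D.IsPrincipal) {n : ℕ} (x : D.MSp (n + 1)) (j : Fin (n + 1)) :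
    arr D (pt (n + 1) x j.castSucc) (pt (n + 1) x j.succ) = x.1 j :=
  arr_eq hA hP (range_pt hA x j) (source_pt x j)

lemma pt_inj (hA : D.IsAmpleGroupoid) (hP : D.IsPrincipal) {n : ℕ} : Injective (pt (D := D) n) := by
  intro x y h
  cases n with
  | zero => exact Subtype.ext (congrFun h 0)
  | succ n =>
    refine Subtype.ext (funext fun j => ?_)
    rw [← pt_arr hA hP x j, ← pt_arr hA hP y j, h]

/-- Tuple from points. -/
def mk : (n : ℕ) → (v : Fin (n + 1) → G) → (∀ i j, Rl D (v i) (v j)) → D.IsAmpleGroupoid → D.MSp n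
  | 0, v, h, hA => ⟨v 0, (h 0 0).unit_left hA⟩
  | (_ + 1), v, h, _ => ⟨fun j => arr D (v j.castSucc) (v j.succ), fun j hj => by
      rw [source_arr (h _ _), range_arr (h _ _)]
      rfl⟩

lemma pt_mk {n : ℕ} {v : Fin (n + 1) → G} (h : ∀ i j, Rl D (v i) (v j)) :
    pt n (mk n v h hA) = v := by
  cases n with
  | zero =>
    funext i
    have : i = 0 := Fin.ext (by omega)
    subst this
    rfl
  | succ n =>
    funext i
    refine Fin.cases ?_ (fun i => ?_) i
    · exact range_arr (h _ _)
    · exact source_arr (h _ _)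

lemma mem_range_pt (hA : D.IsAmpleGroupoid) {n : ℕ} {v : Fin (n + 1) → G} :
    v ∈ Set.range (pt (D := D) n) ↔ ∀ i j, Rl D (v i) (v j) :=
  ⟨by rintro ⟨x, rfl⟩; exact pt_Rl hA x, fun h => ⟨mk n v h hA, pt_mk hA h⟩⟩

lemma arr_pt_zero_continuous (hA : D.IsAmpleGroupoid) (hP : D.IsPrincipal) {n : ℕ} (j : Fin (n + 1)) :
    Continuous fun x : D.MSp n => arr D (pt n x 0) (pt n x j) := by
  cases n with
  | zero =>
    have : j = 0 := Fin.ext (by omega)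
    subst this
    have : (fun x : D.MSp 0 => arr D (pt 0 x 0) (pt 0 x 0)) = fun x => x.1 := by
      funext x; exact arr_self hA hP x.2
    rw [this]
    exact (continuous_subtype_val : Continuous (Subtype.val : ↥(D.unitSpace) → G))
  | succ n =>
    have hc : ∀ j : Fin (n + 1), Continuous fun x : D.MSp (n + 1) => x.1 j := fun j =>
      (continuous_apply j).comp
        (continuous_subtype_val : Continuous (Subtype.val : ↥(D.Comps (n + 1)) → _))
    induction j using Fin.induction with
    | zero =>
      have : (fun x : D.MSp (n + 1) => arr D (pt (n + 1) x 0) (pt (n + 1) x 0))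
          = fun x => D.range (x.1 0) := by
        funext x; exact arr_self hA hP (hA.range_mem _)
      rw [this]
      exact (range_continuous hA).comp (hc 0)
    | succ j ih =>
      have : (fun x : D.MSp (n + 1) => arr D (pt (n + 1) x 0) (pt (n + 1) x j.succ))
          = fun x => D.mul (arr D (pt (n + 1) x 0) (pt (n + 1) x j.castSucc)) (x.1 j) := by
        funext x
        exact arr_trans hA hP (range_arr (pt_Rl hA x _ _)) (source_arr (pt_Rl hA x _ _))
          (range_pt hA x j) (source_pt x j)
      rw [this, ← continuousOn_univ]
      refine mul_continuousOn hA ih.continuousOn (hc j).continuousOn fun x _ => ?_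
      rw [source_arr (pt_Rl hA x _ _), range_pt hA x j]

lemma arr_pt_continuous (hA : D.IsAmpleGroupoid) (hP : D.IsPrincipal) {n : ℕ} (i j : Fin (n + 1)) :
    Continuous fun x : D.MSp n => arr D (pt n x i) (pt n x j) := by
  have : (fun x : D.MSp n => arr D (pt n x i) (pt n x j))
      = fun x => D.mul (D.inv (arr D (pt n x 0) (pt n x i))) (arr D (pt n x 0) (pt n x j)) := by
    funext x
    exact arr_inv_mul hA hP (range_arr (pt_Rl hA x _ _)) (source_arr (pt_Rl hA x _ _))
      (range_arr (pt_Rl hA x _ _)) (source_arr (pt_Rl hA x _ _))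
  rw [this, ← continuousOn_univ]
  refine mul_continuousOn hA (hA.continuous_inv.comp (arr_pt_zero_continuous hA hP i)).continuousOn
    (arr_pt_zero_continuous hA hP j).continuousOn fun x _ => ?_
  rw [hA.source_inv, range_arr (pt_Rl hA x _ _), range_arr (pt_Rl hA x _ _)]

lemma pt_continuous (hA : D.IsAmpleGroupoid) (hP : D.IsPrincipal) {n : ℕ} (i : Fin (n + 1)) : Continuous fun x : D.MSp n => pt n x i := by
  have := arr_pt_continuous hA hP (n := n) i i
  refine this.congr fun x => ?_
  exact arr_self hA hP (pt_unit hA x i)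

lemma continuousOn_into (hA : D.IsAmpleGroupoid) (hP : D.IsPrincipal) {n : ℕ} {X : Type*} [TopologicalSpace X] {f : X → D.MSp n} {S : Set X}
    (h : ∀ i j, ContinuousOn (fun x => arr D (pt n (f x) i) (pt n (f x) j)) S) :
    ContinuousOn f S := by
  cases n with
  | zero =>
    have key : ContinuousOn (fun x => (f x).1) S := by
      refine (h 0 0).congr fun x _ => ?_
      exact (arr_self hA hP (f x).2).symm
    exact (Topology.IsInducing.subtypeVal (t := D.unitSpace)).continuousOn_iff.2 key
  | succ n =>
    have key : ContinuousOn (fun x => (f x).1) S := by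
      rw [continuousOn_pi]
      intro j
      refine (h j.castSucc j.succ).congr fun x _ => ?_
      exact (pt_arr hA hP (f x) j).symm
    exact (Topology.IsInducing.subtypeVal (t := D.Comps (n + 1))).continuousOn_iff.2 key

lemma t2_MSp (hA : D.IsAmpleGroupoid) (n : ℕ) : T2Space (D.MSp n) := by
  have := hA.t2
  cases n with
  | zero => exact (inferInstance : T2Space ↥(D.unitSpace))
  | succ n => exact (inferInstance : T2Space ↥(D.Comps (n + 1)))

lemma pt_localHomeo (hA : D.IsAmpleGroupoid) (hP : D.IsPrincipal) {n : ℕ} (b : Fin (n + 1)) :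
    IsLocalHomeomorph fun x : D.MSp n => pt n x b := by
  apply IsLocalHomeomorph.mk
  intro x0
  choose e he1 he2 using fun j => hA.etale_range (arr D (pt n x0 b) (pt n x0 j))
  have hr : ∀ j g, e j g = D.range g := fun j g => by rw [← he2 j]
  let V : Set G := (⋂ j, (e j).target) ∩ ((e b).target ∩ (e b).symm ⁻¹' D.unitSpace)
  have hVo : IsOpen V := (isOpen_iInter_of_finite fun j => (e j).open_target).inter
    ((e b).isOpen_inter_preimage_symm hA.open_unitSpace)
  let N : Set (D.MSp n) := ⋂ j, (fun x => arr D (pt n x b) (pt n x j)) ⁻¹' (e j).source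
  have hNo : IsOpen N := isOpen_iInter_of_finite fun j =>
    (e j).open_source.preimage (arr_pt_continuous hA hP b j)
  let vv : G → Fin (n + 1) → G := fun u j => D.source ((e j).symm u)
  have hσr : ∀ u ∈ V, ∀ j, D.range ((e j).symm u) = u := by
    intro u hu j
    rw [← hr j]
    exact (e j).right_inv (mem_iInter.1 hu.1 j)
  have hvR : ∀ u ∈ V, ∀ i j, Rl D (vv u i) (vv u j) := by
    intro u hu i j
    have h1 : ∀ j, Rl D u (vv u j) := fun j => ⟨_, hσr u hu j, rfl⟩
    exact ((h1 i).symm hA).trans hA (h1 j)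
  have hvb : ∀ u ∈ V, vv u b = u := by
    intro u hu
    have h1 := hA.source_unit _ hu.2.2
    have h2 := hA.range_unit _ hu.2.2
    rw [hσr u hu b] at h2
    exact h1.trans h2.symm
  let inv' : G → D.MSp n := fun u => if h : ∀ i j, Rl D (vv u i) (vv u j) then mk n _ h hA else x0
  have hinv : ∀ u ∈ V, pt n (inv' u) = vv u := by
    intro u hu
    simp only [inv']
    rw [dif_pos (hvR u hu), pt_mk]
  have hsymm : ∀ x ∈ N, ∀ j, (e j).symm (pt n x b) = arr D (pt n x b) (pt n x j) := by
    intro x hx j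
    have := (e j).left_inv (mem_iInter.1 hx j)
    rw [hr, range_arr (pt_Rl hA x _ _)] at this
    exact this
  have hNV : ∀ x ∈ N, pt n x b ∈ V := by
    intro x hx
    have ht : ∀ j, pt n x b ∈ (e j).target := fun j => by
      have := (e j).map_source (mem_iInter.1 hx j)
      rwa [hr, range_arr (pt_Rl hA x _ _)] at this
    refine ⟨mem_iInter.2 ht, ht b, ?_⟩
    rw [mem_preimage, hsymm x hx, arr_self hA hP (pt_unit hA x b)]
    exact pt_unit hA x b
  have harr : ∀ u ∈ V, ∀ j, arr D (pt n (inv' u) b) (pt n (inv' u) j) = (e j).symm u := by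
    intro u hu j
    rw [hinv u hu]
    exact arr_eq hA hP ((hσr u hu j).trans (hvb u hu).symm) rfl
  refine ⟨{ toFun := fun x => pt n x b
            invFun := inv'
            source := N
            target := V
            map_source' := hNV
            map_target' := ?_
            left_inv' := ?_
            right_inv' := ?_
            open_source := hNo
            open_target := hVo
            continuousOn_toFun := (pt_continuous hA hP b).continuousOn
            continuousOn_invFun := ?_ }, mem_iInter.2 he1, fun x _ => rfl⟩
  · intro u hu
    refine mem_iInter.2 fun j => ?_
    rw [mem_preimage, harr u hu]
    exact (e j).map_target (mem_iInter.1 hu.1 j)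
  · intro x hx
    apply pt_inj hA hP
    rw [hinv _ (hNV x hx)]
    funext j
    simp only [vv]
    rw [hsymm x hx, source_arr (pt_Rl hA x _ _)]
  · intro u hu
    beta_reduce
    rw [hinv u hu, hvb u hu]
  · apply continuousOn_into hA hP
    intro i j
    have hc : ∀ j, ContinuousOn (fun u => (e j).symm u) V := fun j =>
      (e j).continuousOn_symm.mono fun u hu => mem_iInter.1 hu.1 j
    have : ContinuousOn (fun u => D.mul (D.inv ((e i).symm u)) ((e j).symm u)) V := by
      refine mul_continuousOn hA (hA.continuous_inv.comp_continuousOn (hc i)) (hc j) fun u hu => ?_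
      rw [hA.source_inv, hσr u hu, hσr u hu]
    refine this.congr fun u hu => ?_
    rw [hinv u hu]
    exact arr_inv_mul hA hP (hσr u hu i) rfl (hσr u hu j) rfl

lemma coBasis_MSp (hA : D.IsAmpleGroupoid) (hP : D.IsPrincipal) (n : ℕ) : CoBasis (D.MSp n) := by
  intro x U hU hx
  obtain ⟨e, hxe, he⟩ := pt_localHomeo hA hP (n := n) 0 x
  have ho : IsOpen (e '' (e.source ∩ U)) :=
    e.isOpen_image_of_subset_source (e.open_source.inter hU) inter_subset_left
  obtain ⟨B, h1, h2, h3, h4, _⟩ := hA.ample (e x) _ ho ⟨x, ⟨hxe, hx⟩, rfl⟩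
  have hBt : B ⊆ e.target := by
    intro y hy
    obtain ⟨z, hz, rfl⟩ := h2 hy
    exact e.map_source hz.1
  refine ⟨e.symm '' B, ⟨e x, h1, e.left_inv hxe⟩, ?_, ?_, ?_⟩
  · rintro _ ⟨y, hy, rfl⟩
    obtain ⟨z, hz, rfl⟩ := h2 hy
    rw [e.left_inv hz.1]; exact hz.2
  · exact e.symm.isOpen_image_of_subset_source h3 hBt
  · exact h4.image_of_continuousOn (e.continuousOn_symm.mono hBt)

end OrdChain

/-! ### Kernels given by words -/

namespace OrdChain

open Topology

lemma lh_congr {X Y : Type*} [TopologicalSpace X] [TopologicalSpace Y] {f g : X → Y} {W : Set X}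
    (hW : IsOpen W) (h : IsLocalHomeomorphOn f W) (hfg : ∀ x ∈ W, g x = f x) :
    IsLocalHomeomorphOn g W := by
  apply IsLocalHomeomorphOn.mk
  intro x hx
  obtain ⟨e, hxe, rfl⟩ := h x hx
  refine ⟨e.restrOpen W hW, ⟨hxe, hx⟩, fun y hy => ?_⟩
  exact hfg y hy.2

variable {G : Type u} [TopologicalSpace G]

/-- Parameters: a set of units with a continuous choice of arrows and a colouring. -/
structure WP (D : GroupoidData G) (N : ℕ) where
  Z : Set G
  τ : G → G
  col : G → Fin N
  openZ : IsOpen Z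
  contτ : ContinuousOn τ Z
  rangeτ : ∀ u ∈ Z, D.range (τ u) = u
  contcol : ContinuousOn col Z

variable {D : GroupoidData G} {N : ℕ} (p : WP D N)

/-- The retraction. -/
def WP.φ (u : G) : G := D.source (p.τ u)

/-- Tuples with all points in `Z`. -/
def WP.WZ (n : ℕ) : Set (D.MSp n) := {x | ∀ j, pt n x j ∈ p.Z}

/-- The arrow from the base point to a letter. -/
def WP.ar {n : ℕ} (l : Fin (n + 1) × Bool) (x : D.MSp n) : G :=
  if l.2 = true then D.mul (arr D (pt n x 0) (pt n x l.1)) (p.τ (pt n x l.1))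
  else arr D (pt n x 0) (pt n x l.1)

variable (hA : D.IsAmpleGroupoid) (hP : D.IsPrincipal)

lemma WP.openWZ (hA : D.IsAmpleGroupoid) (hP : D.IsPrincipal) (n : ℕ) : IsOpen (p.WZ n) := by
  have : p.WZ n = ⋂ j, (fun x => pt n x j) ⁻¹' p.Z := by ext; simp [WP.WZ]
  rw [this]
  exact isOpen_iInter_of_finite fun j => p.openZ.preimage (pt_continuous hA hP j)

lemma WP.ar_comp (hA : D.IsAmpleGroupoid) {n : ℕ} (i : Fin (n + 1)) {x : D.MSp n} (hx : x ∈ p.WZ n) :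
    D.source (arr D (pt n x 0) (pt n x i)) = D.range (p.τ (pt n x i)) := by
  rw [source_arr (pt_Rl hA x _ _), p.rangeτ _ (hx i)]

lemma WP.range_ar (hA : D.IsAmpleGroupoid) {n : ℕ} (l : Fin (n + 1) × Bool) {x : D.MSp n} (hx : x ∈ p.WZ n) :
    D.range (p.ar l x) = pt n x 0 := by
  unfold WP.ar
  split_ifs
  · rw [hA.range_mul _ _ (p.ar_comp hA _ hx), range_arr (pt_Rl hA x _ _)]
  · rw [range_arr (pt_Rl hA x _ _)]

lemma WP.source_ar (hA : D.IsAmpleGroupoid) {n : ℕ} (l : Fin (n + 1) × Bool) {x : D.MSp n} (hx : x ∈ p.WZ n) :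
    D.source (p.ar l x) = ev p.φ (pt n x) l := by
  unfold WP.ar ev
  split_ifs
  · rw [hA.source_mul _ _ (p.ar_comp hA _ hx)]; rfl
  · rw [source_arr (pt_Rl hA x _ _)]

lemma WP.ar_cont (hA : D.IsAmpleGroupoid) (hP : D.IsPrincipal) {n : ℕ} (l : Fin (n + 1) × Bool) : ContinuousOn (p.ar l) (p.WZ n) := by
  unfold WP.ar
  split_ifs
  · refine mul_continuousOn hA (arr_pt_continuous hA hP 0 l.1).continuousOn ?_
      fun x hx => p.ar_comp hA _ hx
    exact p.contτ.comp (pt_continuous hA hP l.1).continuousOn fun x hx => hx l.1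
  · exact (arr_pt_continuous hA hP 0 l.1).continuousOn

lemma WP.ev_Rl (hA : D.IsAmpleGroupoid) {n : ℕ} (l l' : Fin (n + 1) × Bool) {x : D.MSp n} (hx : x ∈ p.WZ n) :
    Rl D (ev p.φ (pt n x) l) (ev p.φ (pt n x) l') := by
  have h : ∀ l, Rl D (pt n x 0) (ev p.φ (pt n x) l) := fun l =>
    ⟨p.ar l x, p.range_ar hA l hx, p.source_ar hA l hx⟩
  exact ((h l).symm hA).trans hA (h l')

/-- The map on tuples given by a word. -/
def WP.θ {n m : ℕ} (w : Fin (m + 1) → Fin (n + 1) × Bool) (x : D.MSp n) : D.MSp m :=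
  if h : ∀ i j, Rl D ((ev p.φ (pt n x) ∘ w) i) ((ev p.φ (pt n x) ∘ w) j) then OrdChain.mk m _ h hA
  else OrdChain.mk m (fun _ => pt n x 0) (fun _ _ => pt_Rl hA x _ _) hA

lemma WP.pt_θ {n m : ℕ} (w : Fin (m + 1) → Fin (n + 1) × Bool) {x : D.MSp n} (hx : x ∈ p.WZ n) :
    pt m (p.θ hA w x) = ev p.φ (pt n x) ∘ w := by
  unfold WP.θ
  have h : ∀ i j, Rl D ((ev p.φ (pt n x) ∘ w) i) ((ev p.φ (pt n x) ∘ w) j) :=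
    fun i j => p.ev_Rl hA (w i) (w j) hx
  rw [dif_pos h, pt_mk]

lemma WP.θ_cont (hP : D.IsPrincipal) {n m : ℕ} (w : Fin (m + 1) → Fin (n + 1) × Bool) :
    ContinuousOn (p.θ hA w) (p.WZ n) := by
  apply continuousOn_into hA hP
  intro i j
  have : ContinuousOn (fun x => D.mul (D.inv (p.ar (w i) x)) (p.ar (w j) x)) (p.WZ n) := by
    refine mul_continuousOn hA (hA.continuous_inv.comp_continuousOn (p.ar_cont hA hP _))
      (p.ar_cont hA hP _) fun x hx => ?_
    rw [hA.source_inv, p.range_ar hA _ hx, p.range_ar hA _ hx]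
  refine this.congr fun x hx => ?_
  beta_reduce
  rw [p.pt_θ hA w hx]
  exact arr_inv_mul hA hP (p.range_ar hA _ hx) (p.source_ar hA _ hx) (p.range_ar hA _ hx)
    (p.source_ar hA _ hx)

lemma WP.φ_lh (hA : D.IsAmpleGroupoid) : IsLocalHomeomorphOn p.φ p.Z := by
  have h1 : IsLocalHomeomorphOn p.τ p.Z := by
    refine IsLocalHomeomorphOn.of_comp_left (g := D.range) ?_
      (fun x _ => hA.etale_range x) fun x hx => p.contτ.continuousAt (p.openZ.mem_nhds hx)
    refine lh_congr p.openZ (f := id) ?_ fun x hx => p.rangeτ x hx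
    exact fun x _ => (Homeomorph.refl G).isLocalHomeomorph x
  exact IsLocalHomeomorphOn.comp (t := univ) (fun x _ => hA.etale_source x) h1 fun _ _ => mem_univ _

lemma WP.θ_lh (hP : D.IsPrincipal) {n m : ℕ} (w : Fin (m + 1) → Fin (n + 1) × Bool) :
    IsLocalHomeomorphOn (p.θ hA w) (p.WZ n) := by
  refine IsLocalHomeomorphOn.of_comp_left (g := fun y => pt m y 0) ?_
    (fun x _ => pt_localHomeo hA hP 0 x)
    fun x hx => (p.θ_cont hA hP w).continuousAt ((p.openWZ hA hP n).mem_nhds hx)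
  have h2 : IsLocalHomeomorphOn (fun x : D.MSp n => ev p.φ (pt n x) (w 0)) (p.WZ n) := by
    unfold ev
    split_ifs
    · exact IsLocalHomeomorphOn.comp (g := p.φ) (f := fun x : D.MSp n => pt n x (w 0).1) (p.φ_lh hA)
        (fun x _ => pt_localHomeo hA hP (w 0).1 x)
        fun x hx => hx _
    · exact fun x _ => pt_localHomeo hA hP (w 0).1 x
  refine lh_congr (p.openWZ hA hP n) h2 fun x hx => ?_
  rw [comp_apply, p.pt_θ hA w hx]; rfl

/-- Extension of a function on tuples of arrows to tuples of points. -/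
def ext {n : ℕ} (a : D.MSp n → ℤ) : (Fin (n + 1) → G) → ℤ := Function.extend (pt n) a 0

lemma ext_pt (hA : D.IsAmpleGroupoid) (hP : D.IsPrincipal) {n : ℕ} (a : D.MSp n → ℤ) (x : D.MSp n) : ext a (pt n x) = a x :=
  (pt_inj hA hP).extend_apply _ _ _

lemma ext_off {n : ℕ} (a : D.MSp n → ℤ) {v} (hv : v ∉ Set.range (pt (D := D) n)) : ext a v = 0 :=
  Function.extend_apply' _ _ _ hv

lemma ext_ne (hA : D.IsAmpleGroupoid) (hP : D.IsPrincipal) {n : ℕ} {a : D.MSp n → ℤ} {v} (hv : ext a v ≠ 0) : ∃ x, a x ≠ 0 ∧ pt n x = v := by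
  by_cases h : v ∈ Set.range (pt (D := D) n)
  · obtain ⟨x, rfl⟩ := h
    exact ⟨x, by rwa [ext_pt hA hP] at hv, rfl⟩
  · exact absurd (ext_off a h) hv

lemma ext_eq (hA : D.IsAmpleGroupoid) (hP : D.IsPrincipal) {n : ℕ} {f : (Fin (n + 1) → G) → ℤ} (hf : ∀ v, f v ≠ 0 → v ∈ Set.range (pt (D := D) n)) :
    ext (fun x : D.MSp n => f (pt n x)) = f := by
  funext v
  by_cases h : v ∈ Set.range (pt (D := D) n)
  · obtain ⟨x, rfl⟩ := h
    rw [ext_pt hA hP]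
  · rw [ext_off _ h]
    by_contra h'
    exact h (hf v (Ne.symm h'))

lemma act_ext (hA : D.IsAmpleGroupoid) (hP : D.IsPrincipal) {n : ℕ} {Y : Type*} (A : (Fin (n + 1) → G) → (Y →₀ ℤ)) (a : D.MSp n → ℤ) (y : Y) :
    act A (ext a) y = ∑ᶠ x, a x * A (pt n x) y := by
  unfold act
  have h1 : ∑ᶠ v, ext a v * A v y = ∑ᶠ v ∈ Set.range (pt (D := D) n), ext a v * A v y := by
    rw [← finsum_mem_univ]
    apply finsum_mem_inter_support_eq'
    intro v hv
    simp only [mem_univ, true_iff]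
    by_contra h
    exact hv (by beta_reduce; rw [ext_off a h, zero_mul])
  rw [h1, finsum_mem_range (pt_inj hA hP)]
  exact finsum_congr fun x => by rw [ext_pt hA hP]

section kernels

variable {n m : ℕ} {A : (Fin (n + 1) → G) → ((Fin (m + 1) → G) →₀ ℤ)}

lemma rep_ne {k m : ℕ} {A : (Fin k → G) → ((Fin m → G) →₀ ℤ)} {col : G → Fin N} {φ : G → G}
    (hR : Rep col φ A) {v y} (h : A v y ≠ 0) : ∃ w, ev φ v ∘ w = y := by
  obtain ⟨W, hW⟩ := hR
  rw [hW, Finset.sum_apply'] at h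
  obtain ⟨w, _, hw⟩ := Finset.exists_ne_zero_of_sum_ne_zero h
  refine ⟨w, ?_⟩
  by_contra h'
  exact hw (by rw [Finsupp.single_apply, if_neg h'])

/-- Finiteness over a compact set. -/
lemma WP.F1 (hA : D.IsAmpleGroupoid) (hP : D.IsPrincipal) (hR : Rep p.col p.φ A) {C : Set (D.MSp n)} (hC : IsCompact C) (hCZ : C ⊆ p.WZ n)
    (y : Fin (m + 1) → G) : {v | v ∈ pt n '' C ∧ A v y ≠ 0}.Finite := by
  have hf : ∀ w : Fin (m + 1) → Fin (n + 1) × Bool,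
      {x | x ∈ C ∧ pt m (p.θ hA w x) = y}.Finite := by
    intro w
    by_cases hy : y ∈ Set.range (pt (D := D) m)
    · obtain ⟨z, rfl⟩ := hy
      refine (finite_fibre hC ((p.θ_lh hA hP w).mono hCZ) z).subset ?_
      rintro x ⟨h1, h2⟩
      exact ⟨h1, pt_inj hA hP h2⟩
    · convert Set.finite_empty
      ext x
      simp only [mem_setOf_eq, mem_empty_iff_false, iff_false, not_and]
      rintro _ rfl
      exact hy ⟨_, rfl⟩
  refine ((Set.finite_iUnion hf).image (pt n)).subset ?_
  rintro _ ⟨⟨x, hx, rfl⟩, h⟩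
  obtain ⟨w, hw⟩ := rep_ne hR h
  refine ⟨x, mem_iUnion.2 ⟨w, hx, ?_⟩, rfl⟩
  rw [p.pt_θ hA w (hCZ hx), hw]

/-- The compact set carrying the image. -/
lemma WP.F2 (hP : D.IsPrincipal) {C : Set (D.MSp n)} (hC : IsCompact C) (hCZ : C ⊆ p.WZ n) :
    IsCompact (⋃ w : Fin (m + 1) → Fin (n + 1) × Bool, p.θ hA w '' C) :=
  isCompact_iUnion fun w => hC.image_of_continuousOn ((p.θ_cont hA hP w).mono hCZ)

lemma WP.F2_mem (hR : Rep p.col p.φ A) {C : Set (D.MSp n)} (hCZ : C ⊆ p.WZ n) {x : D.MSp n}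
    (hx : x ∈ C) {y} (h : A (pt n x) y ≠ 0) :
    y ∈ pt m '' (⋃ w : Fin (m + 1) → Fin (n + 1) × Bool, p.θ hA w '' C) := by
  obtain ⟨w, hw⟩ := rep_ne hR h
  exact ⟨p.θ hA w x, mem_iUnion.2 ⟨w, x, hx, rfl⟩, by rw [p.pt_θ hA w (hCZ hx), hw]⟩

lemma WP.fib (hA : D.IsAmpleGroupoid) (hP : D.IsPrincipal) (hR : Rep p.col p.φ A) {a : D.MSp n → ℤ} (ha : a ∈ ccZ (D.MSp n))
    (hs : support a ⊆ p.WZ n) : Fib A (ext a) := by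
  intro y
  refine (p.F1 hA hP hR (ccZ_support_compact ha) hs y).subset ?_
  rintro v ⟨h1, h2⟩
  obtain ⟨x, hx, rfl⟩ := ext_ne hA hP h1
  exact ⟨⟨x, hx, rfl⟩, h2⟩

lemma WP.act_range (hA : D.IsAmpleGroupoid) (hP : D.IsPrincipal) (hR : Rep p.col p.φ A) {a : D.MSp n → ℤ} (hs : support a ⊆ p.WZ n) {y}
    (hy : act A (ext a) y ≠ 0) : y ∈ Set.range (pt (D := D) m) := by
  unfold act at hy
  obtain ⟨v, hv⟩ : ∃ v, ext a v * A v y ≠ 0 := by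
    by_contra! h'
    exact hy (by simp [h'])
  obtain ⟨x, hx, rfl⟩ := ext_ne hA hP (left_ne_zero_of_mul hv)
  obtain ⟨z, _, hz⟩ := p.F2_mem hA hR hs hx (right_ne_zero_of_mul hv)
  exact ⟨z, hz⟩

lemma WP.act_ccZ (hA : D.IsAmpleGroupoid) (hP : D.IsPrincipal) (hR : Rep p.col p.φ A) {a : D.MSp n → ℤ} (ha : a ∈ ccZ (D.MSp n))
    (hs : support a ⊆ p.WZ n) : (fun z : D.MSp m => act A (ext a) (pt m z)) ∈ ccZ (D.MSp m) := by
  have := t2_MSp hA n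
  have := t2_MSp hA m
  obtain ⟨W, hW⟩ := hR
  let b : (Fin (m + 1) → Fin (n + 1) × Bool) → D.MSp n → ℤ :=
    fun w x => a x * W (p.col ∘ pt n x) w
  have hb : ∀ w, b w ∈ ccZ (D.MSp n) := by
    intro w
    refine ccZ_mul ha ?_
    have h1 : ContinuousOn (fun x : D.MSp n => p.col ∘ pt n x) (support a) := by
      rw [continuousOn_pi]
      intro j
      exact p.contcol.comp (pt_continuous hA hP j).continuousOn fun x hx => hs hx j
    exact (continuous_of_discreteTopology (f := fun κ => W κ w)).comp_continuousOn h1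
  have hbs : ∀ w, support (b w) ⊆ support a := fun w x hx => left_ne_zero_of_mul hx
  have hg : ∀ w, PushGood (p.θ hA w) (b w) := fun w =>
    pushGood (coBasis_MSp hA hP n) (p.openWZ hA hP n) (p.θ_lh hA hP w) (hb w) ((hbs w).trans hs)
  have key : (fun z : D.MSp m => act A (ext a) (pt m z)) = ∑ w, push (p.θ hA w) (b w) := by
    funext z
    rw [act_ext hA hP, Finset.sum_apply]
    unfold push
    rw [← finsum_sum_comm _ _ fun w _ => push_supp ((hg w).2 z)]
    refine finsum_congr fun x => ?_
    rw [hW, Finset.sum_apply', Finset.mul_sum]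
    refine Finset.sum_congr rfl fun w _ => ?_
    by_cases hx : a x = 0
    · simp [b, hx]
    · rw [Finsupp.single_apply, ← p.pt_θ hA w (hs hx)]
      by_cases hz : p.θ hA w x = z
      · rw [if_pos hz, if_pos (by rw [hz])]
      · rw [if_neg hz, if_neg fun h => hz (pt_inj hA hP h), mul_zero]
  rw [key]
  exact AddSubgroup.sum_mem (ccZSub (D.MSp m)) fun w _ => (hg w).1

lemma WP.ext_act (hA : D.IsAmpleGroupoid) (hP : D.IsPrincipal) (hR : Rep p.col p.φ A) {a : D.MSp n → ℤ}
    (hs : support a ⊆ p.WZ n) :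
    ext (fun z : D.MSp m => act A (ext a) (pt m z)) = act A (ext a) :=
  ext_eq hA hP fun _ hv => p.act_range hA hP hR hs hv

end kernels

/-- Trivial parameters. -/
def triv (hA : D.IsAmpleGroupoid) : WP D 1 where
  Z := D.unitSpace
  τ := id
  col := fun _ => 0
  openZ := hA.open_unitSpace
  contτ := continuousOn_id
  rangeτ := hA.range_unit
  contcol := continuousOn_const

lemma triv_WZ (n : ℕ) : (triv hA).WZ n = univ := by
  ext x
  simp only [WP.WZ, mem_setOf_eq, mem_univ, iff_true]
  exact fun j => pt_unit hA x j

end OrdChain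

/-! ### The boundary map of Matui's complex in terms of points -/

namespace OrdChain

open Topology

variable {G : Type u} [TopologicalSpace G] {D : GroupoidData G}
  (hA : D.IsAmpleGroupoid) (hP : D.IsPrincipal)

lemma dface_pts (hA : D.IsAmpleGroupoid) {n : ℕ} (x : D.MSp (n + 2)) (i : Fin (n + 3)) (j : Fin (n + 1)) :
    D.range (D.dface (n + 1) i x.1 j) = pt (n + 2) x (i.succAbove j.castSucc) ∧
    D.source (D.dface (n + 1) i x.1 j) = pt (n + 2) x (i.succAbove j.succ) := by
  have hc : D.source (x.1 j.castSucc) = D.range (x.1 j.succ) := by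
    rw [source_pt, range_pt hA]
    rfl
  unfold GroupoidData.dface
  split_ifs with h1 h2
  · have e1 : i.succAbove j.castSucc = j.castSucc.castSucc :=
      Fin.succAbove_of_castSucc_lt _ _ (by simp [Fin.lt_def]; omega)
    have e2 : i.succAbove j.succ = j.succ.castSucc :=
      Fin.succAbove_of_castSucc_lt _ _ (by simp [Fin.lt_def]; omega)
    rw [e1, e2]
    exact ⟨range_pt hA x _, source_pt x _⟩
  · have e1 : i.succAbove j.castSucc = j.castSucc.castSucc :=
      Fin.succAbove_of_castSucc_lt _ _ (by simp [Fin.lt_def]; omega)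
    have e2 : i.succAbove j.succ = j.succ.succ :=
      Fin.succAbove_of_le_castSucc _ _ (by simp [Fin.le_def]; omega)
    rw [e1, e2]
    exact ⟨(hA.range_mul _ _ hc).trans (range_pt hA x _),
      (hA.source_mul _ _ hc).trans (source_pt x _)⟩
  · have e1 : i.succAbove j.castSucc = j.castSucc.succ :=
      Fin.succAbove_of_le_castSucc _ _ (by simp [Fin.le_def]; omega)
    have e2 : i.succAbove j.succ = j.succ.succ :=
      Fin.succAbove_of_le_castSucc _ _ (by simp [Fin.le_def]; omega)
    rw [e1, e2]
    exact ⟨range_pt hA x _, source_pt x _⟩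

lemma dface_iff (hA : D.IsAmpleGroupoid) (hP : D.IsPrincipal) {n : ℕ} (x : D.MSp (n + 2)) (y : D.MSp (n + 1)) (i : Fin (n + 3)) :
    D.dface (n + 1) i x.1 = y.1 ↔ pt (n + 2) x ∘ i.succAbove = pt (n + 1) y := by
  constructor
  · intro h
    funext k
    rw [comp_apply]
    refine Fin.cases ?_ (fun j => ?_) k
    · have := (dface_pts hA x i 0).1
      rw [h, range_pt hA] at this
      exact this.symm
    · have := (dface_pts hA x i j).2
      rw [h, source_pt] at this
      exact this.symm
  · intro h
    funext j
    apply arrow_uniq hA hP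
    · rw [(dface_pts hA x i j).1, range_pt hA, ← h]; rfl
    · rw [(dface_pts hA x i j).2, source_pt, ← h]; rfl

lemma act_bd (hA : D.IsAmpleGroupoid) (hP : D.IsPrincipal) {n : ℕ} {a : D.MSp (n + 1) → ℤ} (ha : a ∈ ccZ (D.MSp (n + 1))) (y : Fin (n + 1) → G) :
    act bd (ext a) y = ∑ i : Fin (n + 2), (-1 : ℤ) ^ (i : ℕ) *
      ∑ᶠ x ∈ {x : D.MSp (n + 1) | pt (n + 1) x ∘ i.succAbove = y}, a x := by
  rw [act_ext hA hP]
  have hf : ∀ i : Fin (n + 2),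
      {x : D.MSp (n + 1) | a x ≠ 0 ∧ pt (n + 1) x ∘ i.succAbove = y}.Finite := by
    intro i
    have hR : Rep (triv hA).col (triv hA).φ
      (fun v : Fin (n + 2) → G => Finsupp.single (v ∘ i.succAbove) (1 : ℤ)) := Rep.face_single _ _
    have := (triv hA).fib hA hP hR ha (by rw [triv_WZ]; exact subset_univ _) y
    refine Set.Finite.of_finite_image (f := pt (n + 1)) (this.subset ?_) (pt_inj hA hP).injOn
    rintro _ ⟨x, ⟨h1, rfl⟩, rfl⟩
    refine ⟨by rwa [ext_pt hA hP], ?_⟩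
    simp
  have h1 : ∀ i : Fin (n + 2), (-1 : ℤ) ^ (i : ℕ) *
      ∑ᶠ x ∈ {x : D.MSp (n + 1) | pt (n + 1) x ∘ i.succAbove = y}, a x =
      ∑ᶠ x, a x * (Finsupp.single (pt (n + 1) x ∘ i.succAbove) ((-1 : ℤ) ^ (i : ℕ))) y := by
    intro i
    rw [finsum_mem_def, mul_finsum]
    refine finsum_congr fun x => ?_
    rw [Finsupp.single_apply]
    by_cases hx : pt (n + 1) x ∘ i.succAbove = y
    · rw [if_pos hx, indicator_of_mem (by exact hx), mul_comm]
    · rw [if_neg hx, indicator_of_notMem (by exact hx), mul_zero, mul_zero]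
  simp_rw [h1]
  rw [← finsum_sum_comm]
  · refine finsum_congr fun x => ?_
    unfold bd
    rw [Finset.sum_apply', Finset.mul_sum]
  · intro i _
    refine (hf i).subset fun x hx => ⟨left_ne_zero_of_mul hx, ?_⟩
    have := right_ne_zero_of_mul hx
    by_contra h
    rw [Finsupp.single_apply, if_neg h] at this
    exact this rfl

lemma mBdry_eq (hA : D.IsAmpleGroupoid) (hP : D.IsPrincipal) {n : ℕ} {a : D.MSp (n + 1) → ℤ} (ha : a ∈ ccZ (D.MSp (n + 1))) (y : D.MSp n) :
    D.mBdry n a y = act bd (ext a) (pt n y) := by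
  rw [act_bd hA hP ha]
  cases n with
  | zero =>
    rw [Fin.sum_univ_two]
    have e0 : {x : D.MSp 1 | pt 1 x ∘ (0 : Fin 2).succAbove = pt 0 y}
        = {x : ↥(D.Comps 1) | D.source (x.1 0) = y.1} := by
      ext x
      constructor
      · intro h
        exact congrFun h 0
      · intro h
        funext i
        have : i = 0 := Fin.ext (by omega)
        subst this
        exact h
    have e1 : {x : D.MSp 1 | pt 1 x ∘ (1 : Fin 2).succAbove = pt 0 y}
        = {x : ↥(D.Comps 1) | D.range (x.1 0) = y.1} := by
      ext x
      constructor
      · intro h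
        exact congrFun h 0
      · intro h
        funext i
        have : i = 0 := Fin.ext (by omega)
        subst this
        exact h
    rw [e0, e1]
    simp only [Fin.val_zero, pow_zero, one_mul, Fin.val_one, pow_one, neg_mul, ← sub_eq_add_neg]
    rfl
  | succ n =>
    unfold GroupoidData.mBdry
    refine Finset.sum_congr rfl fun i _ => ?_
    have e : {x : D.MSp (n + 2) | pt (n + 2) x ∘ i.succAbove = pt (n + 1) y}
        = {x : ↥(D.Comps (n + 2)) | D.dface (n + 1) i x.1 = y.1} := by
      ext x
      exact (dface_iff hA hP x y i).symm
    rw [e]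
    rfl

lemma ext_mBdry (hA : D.IsAmpleGroupoid) (hP : D.IsPrincipal) {n : ℕ} {a : D.MSp (n + 1) → ℤ} (ha : a ∈ ccZ (D.MSp (n + 1))) :
    ext (D.mBdry n a) = act bd (ext a) := by
  rw [← (triv hA).ext_act hA hP rep_bd (by rw [triv_WZ]; exact subset_univ _)]
  congr 1
  funext y
  exact mBdry_eq hA hP ha y

lemma ext_injective (hA : D.IsAmpleGroupoid) (hP : D.IsPrincipal) {n : ℕ} : Injective (ext (D := D) (n := n)) := by
  intro a b h
  funext x
  rw [← ext_pt hA hP a, h, ext_pt hA hP]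

end OrdChain

/-! ### Transversals for relatively compact subgroupoids -/

namespace OrdChain

open Topology

variable {G : Type u} [TopologicalSpace G] {D : GroupoidData G}
  (hA : D.IsAmpleGroupoid) (hP : D.IsPrincipal)

lemma exists_label (hA : D.IsAmpleGroupoid) (hP : D.IsPrincipal) {L : Set G} (hL : IsCompact L) : ∃ (M : ℕ) (lam : G → Fin M), Continuous lam ∧
    ∀ h ∈ L, lam (D.range h) = lam (D.source h) → D.range h = D.source h := by
  have := hA.t2
  refine hL.induction_on (p := fun L => ∃ (M : ℕ) (lam : G → Fin M), Continuous lam ∧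
    ∀ h ∈ L, lam (D.range h) = lam (D.source h) → D.range h = D.source h) ?_ ?_ ?_ ?_
  · exact ⟨1, fun _ => 0, continuous_const, fun h hh => absurd hh (by simp)⟩
  · rintro s t hst ⟨M, lam, h1, h2⟩
    exact ⟨M, lam, h1, fun h hh => h2 h (hst hh)⟩
  · rintro s t ⟨M, lam, h1, h2⟩ ⟨M', lam', h1', h2'⟩
    refine ⟨M * M', fun x => finProdFinEquiv (lam x, lam' x),
      (continuous_of_discreteTopology (f := finProdFinEquiv)).comp (h1.prodMk h1'), ?_⟩
    intro h hh heq
    have heq' := finProdFinEquiv.injective heq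
    rw [Prod.mk.injEq] at heq'
    rcases hh with hh | hh
    · exact h2 h hh heq'.1
    · exact h2' h hh heq'.2
  · intro h _
    by_cases heq : D.range h = D.source h
    · refine ⟨D.unitSpace, mem_nhdsWithin_of_mem_nhds
        (hA.open_unitSpace.mem_nhds (hP h heq.symm)), 1, fun _ => 0, continuous_const, ?_⟩
      intro g hg _
      rw [hA.range_unit g hg, hA.source_unit g hg]
    · obtain ⟨B, hB1, hB2, hB3, hB4, _⟩ := hA.ample (D.range h) {D.source h}ᶜ
        isOpen_compl_singleton heq
      have hcl : IsClopen B := ⟨hB4.isClosed, hB3⟩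
      have hs : D.source h ∉ B := fun h' => hB2 h' rfl
      refine ⟨D.range ⁻¹' B ∩ D.source ⁻¹' Bᶜ, mem_nhdsWithin_of_mem_nhds
        (((hB3.preimage (range_continuous hA)).inter
          (hB4.isClosed.isOpen_compl.preimage (source_continuous hA))).mem_nhds ⟨hB1, hs⟩),
        2, fun x => if x ∈ B then 0 else 1, ?_, ?_⟩
      · refine Continuous.if ?_ continuous_const continuous_const
        intro a ha
        have : frontier {x | x ∈ B} = ∅ := hcl.frontier_eq
        rw [this] at ha
        exact absurd ha (by simp)
      · intro g hg heq
        have h1 : D.range g ∈ B := hg.1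
        have h2 : D.source g ∉ B := hg.2
        simp [h1, h2] at heq

lemma setMul_compact (hA : D.IsAmpleGroupoid) {A B : Set G} (hAc : IsCompact A) (hB : IsCompact B) :
    IsCompact (D.setMul A B) := by
  have := hA.t2
  have hcl : IsClosed {p : G × G | D.source p.1 = D.range p.2} :=
    isClosed_eq ((source_continuous hA).comp continuous_fst) ((range_continuous hA).comp continuous_snd)
  have h1 : IsCompact ((Subtype.val : {p : G × G // D.source p.1 = D.range p.2} → G × G) ⁻¹' (A ×ˢ B)) :=
    hcl.isClosedEmbedding_subtypeVal.isCompact_preimage (hAc.prod hB)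
  have h2 := h1.image hA.continuous_mul
  convert h2 using 1
  ext w
  constructor
  · rintro ⟨a, ha, b, hb, hab, rfl⟩
    exact ⟨⟨(a, b), hab⟩, ⟨ha, hb⟩, rfl⟩
  · rintro ⟨⟨⟨a, b⟩, hab⟩, ⟨ha, hb⟩, rfl⟩
    exact ⟨a, ha, b, hb, hab, rfl⟩

lemma setMul_open (hA : D.IsAmpleGroupoid) (hP : D.IsPrincipal) {A B : Set G} (hAo : IsOpen A) (hB : IsOpen B) :
    IsOpen (D.setMul A B) := by
  rw [isOpen_iff_mem_nhds]
  rintro _ ⟨a, ha, b, hb, hab, rfl⟩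
  obtain ⟨e, hae, he⟩ := hA.etale_range a
  have hr : ∀ g, e g = D.range g := fun g => by rw [← he]
  have hσ : ∀ u ∈ e.target, D.range (e.symm u) = u := fun u hu => by
    rw [← hr]; exact e.right_inv hu
  have hrw : D.range (D.mul a b) = D.range a := hA.range_mul _ _ hab
  have hT : IsOpen (D.range ⁻¹' e.target) := e.open_target.preimage (range_continuous hA)
  have hw0 : D.mul a b ∈ D.range ⁻¹' e.target := by
    rw [mem_preimage, hrw, ← hr]; exact e.map_source hae
  have hc1 : ContinuousOn (fun w => e.symm (D.range w)) (D.range ⁻¹' e.target) :=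
    e.continuousOn_symm.comp (range_continuous hA).continuousOn fun w hw => hw
  have hcomp : ∀ w ∈ D.range ⁻¹' e.target, D.source (D.inv (e.symm (D.range w))) = D.range w := by
    intro w hw
    rw [hA.source_inv, hσ _ hw]
  have hc2 : ContinuousOn (fun w => D.mul (D.inv (e.symm (D.range w))) w) (D.range ⁻¹' e.target) :=
    mul_continuousOn hA (hA.continuous_inv.comp_continuousOn hc1) continuousOn_id hcomp
  have ha0 : e.symm (D.range (D.mul a b)) = a := by
    rw [hrw, ← hr]; exact e.left_inv hae
  have hb0 : D.mul (D.inv (e.symm (D.range (D.mul a b)))) (D.mul a b) = b := by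
    have := hcomp _ hw0
    apply arrow_uniq hA hP
    · rw [hA.range_mul _ _ this, ha0, hA.range_inv, hab]
    · rw [hA.source_mul _ _ this, hA.source_mul _ _ hab]
  have n1 := (hc1.continuousAt (hT.mem_nhds hw0)).preimage_mem_nhds
    (hAo.mem_nhds (by rw [ha0]; exact ha))
  have n2 := (hc2.continuousAt (hT.mem_nhds hw0)).preimage_mem_nhds
    (hB.mem_nhds (by rw [hb0]; exact hb))
  filter_upwards [n1, n2, hT.mem_nhds hw0] with w h1 h2 h3
  have hcw := hcomp w h3
  have hcw' : D.source (e.symm (D.range w)) = D.range (D.mul (D.inv (e.symm (D.range w))) w) := by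
    rw [hA.range_mul _ _ hcw, hA.range_inv]
  refine ⟨_, h1, _, h2, hcw', ?_⟩
  apply arrow_uniq hA hP
  · rw [hA.range_mul _ _ hcw', hσ _ h3]
  · rw [hA.source_mul _ _ hcw', hA.source_mul _ _ hcw]

/-- Powers of a set. -/
def Spow (D : GroupoidData G) (K : Set G) : ℕ → Set G
  | 0 => K ∩ D.unitSpace
  | (t + 1) => D.setMul (Spow D K t) K

section

variable {K : Set G} (hKo : IsOpen K) (hKc : IsCompact K) (hinv : ∀ g ∈ K, D.inv g ∈ K)
  (hrK : ∀ g ∈ K, D.range g ∈ K)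

lemma isClosed_unitSpace (hA : D.IsAmpleGroupoid) : IsClosed D.unitSpace := by
  have := hA.t2
  have : D.unitSpace = {g | D.range g = g} := by
    ext g
    exact ⟨hA.range_unit g, fun h => by rw [← show D.range g = g from h]; exact hA.range_mem g⟩
  rw [this]
  exact isClosed_eq (range_continuous hA) continuous_id

lemma Spow_compact (hA : D.IsAmpleGroupoid) (hKc : IsCompact K) (t : ℕ) : IsCompact (Spow D K t) := by
  induction t with
  | zero => exact hKc.inter_right (isClosed_unitSpace hA)
  | succ t ih => exact setMul_compact hA ih hKc

lemma Spow_open (hA : D.IsAmpleGroupoid) (hP : D.IsPrincipal) (hKo : IsOpen K) (t : ℕ) : IsOpen (Spow D K t) := by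
  induction t with
  | zero => exact hKo.inter hA.open_unitSpace
  | succ t ih => exact setMul_open hA hP ih hKo

lemma Spow_sub (t : ℕ) {g : G} (hg : g ∈ Spow D K t) : D.InSubgroupoid K g := by
  induction t generalizing g with
  | zero => exact .base hg.1
  | succ t ih =>
    obtain ⟨a, ha, b, hb, hab, rfl⟩ := hg
    exact .mul (ih ha) (.base hb) hab

lemma sub_ends (hA : D.IsAmpleGroupoid) (hinv : ∀ g ∈ K, D.inv g ∈ K) (hrK : ∀ g ∈ K, D.range g ∈ K) {g : G} (hg : D.InSubgroupoid K g) : D.range g ∈ K ∧ D.source g ∈ K := by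
  induction hg with
  | base h =>
    refine ⟨hrK _ h, ?_⟩
    rw [← hA.range_inv]
    exact hrK _ (hinv _ h)
  | inv _ ih => rw [hA.range_inv, hA.source_inv]; exact ih.symm
  | mul _ _ h ih1 ih2 => rw [hA.range_mul _ _ h, hA.source_mul _ _ h]; exact ⟨ih1.1, ih2.2⟩

lemma Spow_mono (hA : D.IsAmpleGroupoid) (hinv : ∀ g ∈ K, D.inv g ∈ K) (hrK : ∀ g ∈ K, D.range g ∈ K) : Monotone (Spow D K) := by
  refine monotone_nat_of_le_succ fun t g hg => ?_
  have hs := (sub_ends hA hinv hrK (Spow_sub t hg)).2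
  exact ⟨g, hg, D.source g, hs, (hA.range_unit _ (hA.source_mem g)).symm, (hA.mul_unit g).symm⟩

lemma Spow_stable (hA : D.IsAmpleGroupoid) (hP : D.IsPrincipal) (hinv : ∀ g ∈ K, D.inv g ∈ K) (hrK : ∀ g ∈ K, D.range g ∈ K) {M : ℕ} {lam : G → Fin M}
    (hlam : ∀ h, D.InSubgroupoid K h → lam (D.range h) = lam (D.source h) → D.range h = D.source h)
    {g : G} (hg : g ∈ Spow D K (M + 1)) : g ∈ Spow D K M := by
  have hmono := Spow_mono hA hinv hrK
  let E : ℕ → Finset (Fin M) := fun t =>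
    Finset.univ.filter fun l => ∃ h ∈ Spow D K t, D.range h = D.range g ∧ lam (D.source h) = l
  have hE : Monotone E := by
    intro s t hst l
    simp only [E, Finset.mem_filter, Finset.mem_univ, true_and]
    rintro ⟨h, h1, h2⟩
    exact ⟨h, hmono hst h1, h2⟩
  have key : ∀ t, (E t).card = (E (t + 1)).card →
      ∀ k ∈ Spow D K (t + 1), D.range k = D.range g → k ∈ Spow D K t := by
    intro t ht k hk hkr
    have hEE : E t = E (t + 1) := Finset.eq_of_subset_of_card_le (hE (Nat.le_succ t)) ht.ge
    have : lam (D.source k) ∈ E (t + 1) := by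
      simp only [E, Finset.mem_filter, Finset.mem_univ, true_and]
      exact ⟨k, hk, hkr, rfl⟩
    rw [← hEE] at this
    simp only [E, Finset.mem_filter, Finset.mem_univ, true_and] at this
    obtain ⟨h, h1, h2, h3⟩ := this
    have hc : D.source (D.inv h) = D.range k := by rw [hA.source_inv, h2, hkr]
    have := hlam (D.mul (D.inv h) k) (.mul (.inv (Spow_sub t h1)) (Spow_sub _ hk) hc)
    rw [hA.range_mul _ _ hc, hA.source_mul _ _ hc, hA.range_inv] at this
    have hh : h = k := arrow_uniq hA hP (h2.trans hkr.symm) (this h3)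
    rwa [← hh]
  have hst := Nat.stabilises_of_monotone (f := fun t => (E t).card) (b := M) (n := M + 1)
    (fun s t hst => Finset.card_le_card (hE hst))
    (fun t => (Finset.card_le_univ _).trans (by simp)) ?_ (Nat.le_succ M)
  · exact key M hst.symm g hg rfl
  · intro t ht
    have hk := key t ht
    refine le_antisymm (Finset.card_le_card (hE (Nat.le_succ _))) (Finset.card_le_card ?_)
    intro l
    simp only [E, Finset.mem_filter, Finset.mem_univ, true_and]
    rintro ⟨_, ⟨a, ha, b, hb, hab, rfl⟩, h2, h3⟩
    refine ⟨_, ⟨a, hk a ha ?_, b, hb, hab, rfl⟩, h2, h3⟩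
    rw [← h2, hA.range_mul _ _ hab]

lemma Spow_eq (hA : D.IsAmpleGroupoid) (hP : D.IsPrincipal) (hinv : ∀ g ∈ K, D.inv g ∈ K) (hrK : ∀ g ∈ K, D.range g ∈ K) {M : ℕ} {lam : G → Fin M}
    (hlam : ∀ h, D.InSubgroupoid K h → lam (D.range h) = lam (D.source h) → D.range h = D.source h)
    {g : G} : g ∈ Spow D K M ↔ D.InSubgroupoid K g := by
  refine ⟨Spow_sub M, fun hg => ?_⟩
  have step : ∀ x k, k ∈ K → (∃ h ∈ Spow D K M, D.range h = x ∧ D.source h = D.range k) →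
      ∃ h ∈ Spow D K M, D.range h = x ∧ D.source h = D.source k := by
    rintro x k hk ⟨h, h1, h2, h3⟩
    refine ⟨D.mul h k, Spow_stable hA hP hinv hrK hlam ⟨h, h1, k, hk, h3, rfl⟩, ?_, ?_⟩
    · rw [hA.range_mul _ _ h3, h2]
    · rw [hA.source_mul _ _ h3]
  have main : ∀ x, (∃ h ∈ Spow D K M, D.range h = x ∧ D.source h = D.range g) ↔
      ∃ h ∈ Spow D K M, D.range h = x ∧ D.source h = D.source g := by
    intro x
    induction hg with
    | @base k hk =>
      refine ⟨step x k hk, fun h => ?_⟩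
      have := step x (D.inv k) (hinv k hk)
      rw [hA.range_inv, hA.source_inv] at this
      exact this h
    | inv _ ih => rw [hA.range_inv, hA.source_inv]; exact ih.symm
    | mul _ _ h ih1 ih2 =>
      rw [hA.range_mul _ _ h, hA.source_mul _ _ h, ih1, h, ih2]
  have h0 : D.range g ∈ Spow D K M :=
    Spow_mono hA hinv hrK (Nat.zero_le M) ⟨(sub_ends hA hinv hrK hg).1, hA.range_mem g⟩
  have hu := hA.range_mem g
  obtain ⟨h, h1, h2, h3⟩ := (main (D.range g)).1 ⟨D.range g, h0, hA.range_unit _ hu, hA.source_unit _ hu⟩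
  rwa [← arrow_uniq hA hP h2 h3]

lemma transversal (hA : D.IsAmpleGroupoid) (hP : D.IsPrincipal) (hKo : IsOpen K) (hKc : IsCompact K) (hinv : ∀ g ∈ K, D.inv g ∈ K) (hrK : ∀ g ∈ K, D.range g ∈ K) {L : Set G} (hL : IsCompact L) (hHL : ∀ g, D.InSubgroupoid K g → g ∈ L) :
    ∃ τ : G → G, ContinuousOn τ (K ∩ D.unitSpace) ∧
      (∀ u ∈ K ∩ D.unitSpace, D.range (τ u) = u) ∧
      ∀ g ∈ K, D.source (τ (D.range g)) = D.source (τ (D.source g)) := by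
  have := hA.t2
  obtain ⟨M, lam, hlc, hlam'⟩ := exists_label hA hP hL
  have hlam : ∀ h, D.InSubgroupoid K h → lam (D.range h) = lam (D.source h) →
      D.range h = D.source h := fun h hh => hlam' h (hHL h hh)
  have hHeq : ∀ g, g ∈ Spow D K M ↔ D.InSubgroupoid K g := fun g => Spow_eq hA hP hinv hrK hlam
  have hHc := Spow_compact hA hKc M
  have hHo := Spow_open hA hP hKo M
  set H := Spow D K M with hH
  have huniq : ∀ h ∈ H, ∀ k ∈ H, D.range h = D.range k → lam (D.source h) = lam (D.source k) →
      h = k := by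
    intro h hh k hk hr hl
    have hc : D.source (D.inv h) = D.range k := by rw [hA.source_inv, hr]
    have := hlam (D.mul (D.inv h) k) (.mul (.inv ((hHeq h).1 hh)) ((hHeq k).1 hk) hc)
    rw [hA.range_mul _ _ hc, hA.source_mul _ _ hc, hA.range_inv] at this
    exact arrow_uniq hA hP hr (this hl)
  have hex : ∀ x, ∃ h, x ∈ K ∩ D.unitSpace → h ∈ H ∧ D.range h = x ∧
      ∀ k ∈ H, D.range k = x → lam (D.source h) ≤ lam (D.source k) := by
    intro x
    by_cases hx : x ∈ K ∩ D.unitSpace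
    · let F : Finset (Fin M) := Finset.univ.filter fun l => ∃ h ∈ H, D.range h = x ∧
        lam (D.source h) = l
      have hne : F.Nonempty := by
        refine ⟨lam (D.source x), ?_⟩
        simp only [F, Finset.mem_filter, Finset.mem_univ, true_and]
        exact ⟨x, (hHeq x).2 (.base hx.1), hA.range_unit _ hx.2, rfl⟩
      have hm := Finset.min'_mem F hne
      have hm' := hm
      simp only [F, Finset.mem_filter, Finset.mem_univ, true_and] at hm'
      obtain ⟨h, h1, h2, h3⟩ := hm'
      refine ⟨h, fun _ => ⟨h1, h2, fun k hk hkr => ?_⟩⟩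
      rw [h3]
      apply Finset.min'_le
      simp only [F, Finset.mem_filter, Finset.mem_univ, true_and]
      exact ⟨k, hk, hkr, rfl⟩
    · exact ⟨x, fun h => absurd h hx⟩
  choose τ hτ using hex
  refine ⟨τ, ?_, fun u hu => (hτ u hu).2.1, ?_⟩
  · intro x0 hx0
    apply ContinuousAt.continuousWithinAt
    obtain ⟨h1, h2, h3⟩ := hτ x0 hx0
    obtain ⟨e, hae, he⟩ := hA.etale_range (τ x0)
    have hr : ∀ g, e g = D.range g := fun g => by rw [← he]
    have hσ : ∀ u ∈ e.target, D.range (e.symm u) = u := fun u hu => by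
      rw [← hr]; exact e.right_inv hu
    have hxt : x0 ∈ e.target := by
      have := e.map_source hae
      rwa [hr, h2] at this
    have hx0' : e.symm x0 = τ x0 := by
      have := e.left_inv hae
      rwa [hr, h2] at this
    have hσc : ContinuousAt e.symm x0 := e.continuousAt_symm hxt
    have hDcl : IsClosed (D.range '' (H ∩ {g | lam (D.source g) < lam (D.source (τ x0))})) := by
      refine IsCompact.isClosed ((hHc.inter_right ?_).image (range_continuous hA))
      exact (isClosed_discrete {l | l < lam (D.source (τ x0))}).preimage
        (hlc.comp (source_continuous hA))
    have hDn : x0 ∉ D.range '' (H ∩ {g | lam (D.source g) < lam (D.source (τ x0))}) := by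
      rintro ⟨g, ⟨hg1, hg2⟩, hg3⟩
      exact absurd (h3 g hg1 hg3) (not_le.2 hg2)
    have n1 := hDcl.isOpen_compl.mem_nhds hDn
    have n2 := hσc.preimage_mem_nhds (hHo.mem_nhds (by rw [hx0']; exact h1))
    have n3 : ∀ᶠ x in 𝓝 x0, lam (D.source (e.symm x)) = lam (D.source (τ x0)) := by
      have hc : ContinuousAt (fun x => lam (D.source (e.symm x))) x0 :=
        ContinuousAt.comp (g := fun g => lam (D.source g))
          (hlc.comp (source_continuous hA)).continuousAt hσc
      have := hc.preimage_mem_nhds ((isOpen_discrete {lam (D.source (e.symm x0))}).mem_nhds rfl)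
      filter_upwards [this] with x hx
      rw [← hx0']
      exact hx
    refine hσc.congr ?_
    filter_upwards [n1, n2, n3, e.open_target.mem_nhds hxt,
      (hKo.inter hA.open_unitSpace).mem_nhds hx0] with x m1 m2 m3 m4 m5
    obtain ⟨k1, k2, k3⟩ := hτ x m5
    refine huniq _ m2 _ k1 ((hσ x m4).trans k2.symm) (le_antisymm ?_ (k3 _ m2 (hσ x m4)))
    rw [m3]
    by_contra hlt
    exact m1 ⟨τ x, ⟨k1, not_le.1 hlt⟩, k2⟩
  · intro g hg
    have hu1 : D.range g ∈ K ∩ D.unitSpace := ⟨hrK g hg, hA.range_mem g⟩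
    have hu2 : D.source g ∈ K ∩ D.unitSpace := by
      refine ⟨?_, hA.source_mem g⟩
      rw [← hA.range_inv]
      exact hrK _ (hinv g hg)
    obtain ⟨a1, a2, a3⟩ := hτ _ hu1
    obtain ⟨b1, b2, b3⟩ := hτ _ hu2
    have c1 : D.source g = D.range (τ (D.source g)) := b2.symm
    have c2 : D.source (D.inv g) = D.range (τ (D.range g)) := by rw [hA.source_inv, a2]
    have m1 : D.mul g (τ (D.source g)) ∈ H := (hHeq _).2 (.mul (.base hg) ((hHeq _).1 b1) c1)
    have m2 : D.mul (D.inv g) (τ (D.range g)) ∈ H :=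
      (hHeq _).2 (.mul (.base (hinv g hg)) ((hHeq _).1 a1) c2)
    have l1 := a3 _ m1 (hA.range_mul _ _ c1)
    have l2 := b3 _ m2 ((hA.range_mul _ _ c2).trans (hA.range_inv g))
    rw [hA.source_mul _ _ c1] at l1
    rw [hA.source_mul _ _ c2] at l2
    have := huniq _ a1 _ m1 (by rw [a2, hA.range_mul _ _ c1])
      (by rw [hA.source_mul _ _ c1]; exact le_antisymm l1 l2)
    rw [this, hA.source_mul _ _ c1]

end

end OrdChain

/-! ### Assembly -/

namespace OrdChain

open Topology

variable {G : Type u} [TopologicalSpace G] {D : GroupoidData G}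
  (hA : D.IsAmpleGroupoid) (hP : D.IsPrincipal)

lemma exists_compact_open (hA : D.IsAmpleGroupoid) {C : Set G} (hC : IsCompact C) :
    ∃ K : Set G, IsOpen K ∧ IsCompact K ∧ C ⊆ K := by
  refine hC.induction_on (p := fun C => ∃ K : Set G, IsOpen K ∧ IsCompact K ∧ C ⊆ K) ?_ ?_ ?_ ?_
  · exact ⟨∅, isOpen_empty, isCompact_empty, subset_rfl⟩
  · rintro s t hst ⟨K, h1, h2, h3⟩
    exact ⟨K, h1, h2, hst.trans h3⟩
  · rintro s t ⟨K, h1, h2, h3⟩ ⟨K', h1', h2', h3'⟩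
    exact ⟨K ∪ K', h1.union h1', h2.union h2', union_subset_union h3 h3'⟩
  · intro x _
    obtain ⟨B, hB1, hB2, hB3, hB4, _⟩ := hA.ample x univ isOpen_univ (mem_univ x)
    exact ⟨B, mem_nhdsWithin_of_mem_nhds (hB3.mem_nhds hB1), B, hB3, hB4, subset_rfl⟩

lemma exists_shrink (hA : D.IsAmpleGroupoid) {N : ℕ} {Z : Set G} (hZ : IsCompact Z) {U : Fin N → Set G}
    (hU : ∀ i, IsOpen (U i)) (hZU : Z ⊆ ⋃ i, U i) :
    ∃ V : Fin N → Set G, (∀ i, IsOpen (V i) ∧ IsCompact (V i) ∧ V i ⊆ U i) ∧ Z ⊆ ⋃ i, V i := by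
  refine hZ.induction_on (p := fun Z => ∃ V : Fin N → Set G,
    (∀ i, IsOpen (V i) ∧ IsCompact (V i) ∧ V i ⊆ U i) ∧ Z ⊆ ⋃ i, V i) ?_ ?_ ?_ ?_
  · exact ⟨fun _ => ∅, fun i => ⟨isOpen_empty, isCompact_empty, empty_subset _⟩, empty_subset _⟩
  · rintro s t hst ⟨V, h1, h2⟩
    exact ⟨V, h1, hst.trans h2⟩
  · rintro s t ⟨V, h1, h2⟩ ⟨V', h1', h2'⟩
    refine ⟨fun i => V i ∪ V' i, fun i => ⟨(h1 i).1.union (h1' i).1, (h1 i).2.1.union (h1' i).2.1,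
      union_subset (h1 i).2.2 (h1' i).2.2⟩, ?_⟩
    rw [iUnion_union_distrib]
    exact union_subset_union h2 h2'
  · intro x hx
    obtain ⟨i, hi⟩ := mem_iUnion.1 (hZU hx)
    obtain ⟨B, hB1, hB2, hB3, hB4, _⟩ := hA.ample x (U i) (hU i) hi
    refine ⟨B, mem_nhdsWithin_of_mem_nhds (hB3.mem_nhds hB1), fun j => if j = i then B else ∅, ?_, ?_⟩
    · intro j
      beta_reduce
      split_ifs with h
      · subst h; exact ⟨hB3, hB4, hB2⟩
      · exact ⟨isOpen_empty, isCompact_empty, empty_subset _⟩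
    · intro y hy
      exact mem_iUnion.2 ⟨i, by simpa using hy⟩

lemma exists_colour (hA : D.IsAmpleGroupoid) {N : ℕ} {Z : Set G} (hZ : IsCompact Z) {U : Fin (N + 1) → Set G}
    (hU : ∀ i, IsOpen (U i)) (hZU : Z ⊆ ⋃ i, U i) :
    ∃ col : G → Fin (N + 1), Continuous col ∧ ∀ x ∈ Z, x ∈ U (col x) := by
  have := hA.t2
  obtain ⟨V, hV, hZV⟩ := exists_shrink hA hZ hU hZU
  let b : G → Fin (N + 1) → Bool := fun x i => if x ∈ V i then true else false
  have hb : Continuous b := by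
    rw [continuous_pi_iff]
    intro i
    refine Continuous.if ?_ continuous_const continuous_const
    intro a ha
    have : frontier {x | x ∈ V i} = ∅ :=
      IsClopen.frontier_eq ⟨(hV i).2.1.isClosed, (hV i).1⟩
    rw [this] at ha
    exact absurd ha (by simp)
  let c : (Fin (N + 1) → Bool) → Fin (N + 1) := fun f =>
    if h : ∃ i, f i = true then h.choose else 0
  refine ⟨fun x => c (b x), (continuous_of_discreteTopology (f := c)).comp hb, fun x hx => ?_⟩
  obtain ⟨i, hi⟩ := mem_iUnion.1 (hZV hx)
  have hex : ∃ i, b x i = true := ⟨i, by simp [b, hi]⟩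
  have h1 : b x (c (b x)) = true := by
    simp only [c]
    rw [dif_pos hex]
    exact hex.choose_spec
  apply (hV _).2.2
  by_contra h2
  have h3 : b x (c (b x)) = false := if_neg h2
  rw [h3] at h1
  exact absurd h1 (by simp)

lemma exists_params (hA : D.IsAmpleGroupoid) (hP : D.IsPrincipal) {d : ℕ} (hdad : D.DadLE d) {C : Set G} (hC : IsCompact C) :
    ∃ p : WP D (d + 1), ∀ g ∈ C, D.range g ∈ p.Z ∧
      (p.col (D.range g) = p.col (D.source g) → p.φ (D.range g) = p.φ (D.source g)) := by
  have := hA.t2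
  obtain ⟨K0, hK0o, hK0c, hCK⟩ := exists_compact_open hA hC
  have hii : ∀ g, D.inv (D.inv g) = g := fun g => arrow_uniq hA hP
    (by rw [hA.range_inv, hA.source_inv]) (by rw [hA.source_inv, hA.range_inv])
  have hiu : ∀ u ∈ D.unitSpace, D.inv u = u := fun u hu => arrow_uniq hA hP
    (by rw [hA.range_inv, hA.source_unit u hu, hA.range_unit u hu])
    (by rw [hA.source_inv, hA.source_unit u hu, hA.range_unit u hu])
  let K : Set G := (K0 ∪ D.inv ⁻¹' K0) ∪ (D.range '' K0 ∪ D.source '' K0)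
  have hKo : IsOpen K := (hK0o.union (hK0o.preimage hA.continuous_inv)).union
    ((hA.etale_range.isOpenMap _ hK0o).union (hA.etale_source.isOpenMap _ hK0o))
  have hKc : IsCompact K := by
    refine (hK0c.union ?_).union ((hK0c.image (range_continuous hA)).union
      (hK0c.image (source_continuous hA)))
    have : D.inv ⁻¹' K0 = D.inv '' K0 := by
      ext g
      exact ⟨fun h => ⟨_, h, hii g⟩, by rintro ⟨k, hk, rfl⟩; rw [mem_preimage, hii]; exact hk⟩
    rw [this]
    exact hK0c.image hA.continuous_inv
  have hKi : ∀ g ∈ K, D.inv g ∈ K := by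
    rintro g ((h | h) | (⟨k, hk, rfl⟩ | ⟨k, hk, rfl⟩))
    · exact Or.inl (Or.inr (by rw [mem_preimage, hii]; exact h))
    · exact Or.inl (Or.inl h)
    · rw [hiu _ (hA.range_mem _)]; exact Or.inr (Or.inl ⟨k, hk, rfl⟩)
    · rw [hiu _ (hA.source_mem _)]; exact Or.inr (Or.inr ⟨k, hk, rfl⟩)
  have hKr : ∀ g ∈ K, D.range g ∈ K := by
    rintro g ((h | h) | (⟨k, hk, rfl⟩ | ⟨k, hk, rfl⟩))
    · exact Or.inr (Or.inl ⟨g, h, rfl⟩)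
    · exact Or.inr (Or.inr ⟨D.inv g, h, hA.source_inv g⟩)
    · rw [hA.range_unit _ (hA.range_mem _)]; exact Or.inr (Or.inl ⟨k, hk, rfl⟩)
    · rw [hA.range_unit _ (hA.source_mem _)]; exact Or.inr (Or.inr ⟨k, hk, rfl⟩)
  have hKs : ∀ g ∈ K, D.source g ∈ K := fun g hg => by
    rw [← hA.range_inv]; exact hKr _ (hKi g hg)
  obtain ⟨U, hU1, hU2, hU3⟩ := hdad K hKo (by rw [hKc.isClosed.closure_eq]; exact hKc)
  have hZc : IsCompact (K ∩ D.unitSpace) := hKc.inter_right (isClosed_unitSpace hA)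
  have hZU : K ∩ D.unitSpace ⊆ ⋃ i, U i := fun u hu =>
    hU2 (Or.inl ⟨u, hu.1, hA.range_unit u hu.2⟩)
  obtain ⟨col, hcol, hcolU⟩ := exists_colour hA hZc (fun i => (hU1 i).1) hZU
  let K' : Set G := K ∩ {g | col (D.range g) = col (D.source g)}
  have hcl : IsClopen {g | col (D.range g) = col (D.source g)} :=
    (isClopen_discrete {q : Fin (d + 1) × Fin (d + 1) | q.1 = q.2}).preimage
      ((hcol.comp (range_continuous hA)).prodMk (hcol.comp (source_continuous hA)))
  have hK'r : ∀ g ∈ K, D.range g ∈ K' := fun g hg => ⟨hKr g hg, by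
    have hu := hA.range_mem g
    rw [mem_setOf_eq, hA.range_unit _ hu, hA.source_unit _ hu]⟩
  have hsub : ∀ g, D.InSubgroupoid K' g → col (D.range g) = col (D.source g) ∧
      ∀ i, i = col (D.range g) →
        D.InSubgroupoid {k ∈ K | D.source k ∈ U i ∧ D.range k ∈ U i} g := by
    intro g hg
    induction hg with
    | @base k hk =>
      refine ⟨hk.2, ?_⟩
      rintro _ rfl
      refine .base ⟨hk.1, ?_, hcolU _ ⟨hKr k hk.1, hA.range_mem k⟩⟩
      have := hcolU _ ⟨hKs k hk.1, hA.source_mem k⟩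
      rwa [show col (D.source k) = col (D.range k) from hk.2.symm] at this
    | inv _ ih =>
      rw [hA.range_inv, hA.source_inv]
      exact ⟨ih.1.symm, fun i hi => .inv (ih.2 i (hi.trans ih.1.symm))⟩
    | mul _ _ h ih1 ih2 =>
      rw [hA.range_mul _ _ h, hA.source_mul _ _ h]
      have e1 := ih1.1
      rw [h] at e1
      exact ⟨e1.trans ih2.1, fun i hi => .mul (ih1.2 i hi) (ih2.2 i (hi.trans e1)) h⟩
  obtain ⟨τ, hτ1, hτ2, hτ3⟩ := transversal hA hP (K := K') (hKo.inter hcl.2) (hKc.inter_right hcl.1)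
    (fun g hg => ⟨hKi g hg.1, by rw [mem_setOf_eq, hA.range_inv, hA.source_inv]; exact hg.2.symm⟩)
    (fun g hg => hK'r g hg.1)
    (isCompact_iUnion hU3)
    (fun g hg => mem_iUnion.2 ⟨col (D.range g), subset_closure ((hsub g hg).2 _ rfl)⟩)
  refine ⟨{ Z := K' ∩ D.unitSpace
            τ := τ
            col := col
            openZ := (hKo.inter hcl.2).inter hA.open_unitSpace
            contτ := hτ1
            rangeτ := hτ2
            contcol := hcol.continuousOn }, fun g hg => ?_⟩
  have hgK : g ∈ K := Or.inl (Or.inl (hCK hg))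
  exact ⟨⟨hK'r g hgK, hA.range_mem g⟩, fun h => hτ3 g ⟨hgK, h⟩⟩

end OrdChain

/-! ### The homotopy and the conclusion -/

namespace OrdChain

open Topology

variable {G : Type u} [TopologicalSpace G] {D : GroupoidData G}
  (hA : D.IsAmpleGroupoid) (hP : D.IsPrincipal)

/-- The arrows occurring in a function. -/
def arrows {n : ℕ} (a : D.MSp n → ℤ) : Set G :=
  ⋃ q : Fin (n + 1) × Fin (n + 1), (fun x => arr D (pt n x q.1) (pt n x q.2)) '' support a

lemma arrows_compact (hA : D.IsAmpleGroupoid) (hP : D.IsPrincipal) {n : ℕ} {a : D.MSp n → ℤ} (ha : a ∈ ccZ (D.MSp n)) : IsCompact (arrows a) :=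
  isCompact_iUnion fun q => (ccZ_support_compact ha).image (arr_pt_continuous hA hP q.1 q.2)

/-- Parameters adapted to a function. -/
def Good {N : ℕ} (p : WP D N) {n : ℕ} (a : D.MSp n → ℤ) : Prop :=
  support a ⊆ p.WZ n ∧ ∀ x, a x ≠ 0 → Coh p.col p.φ (pt n x)

lemma good_of (hA : D.IsAmpleGroupoid) {N : ℕ} {p : WP D N} {n : ℕ} {a : D.MSp n → ℤ}
    (h : ∀ g ∈ arrows a, D.range g ∈ p.Z ∧
      (p.col (D.range g) = p.col (D.source g) → p.φ (D.range g) = p.φ (D.source g))) :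
    Good p a := by
  have hm : ∀ x, a x ≠ 0 → ∀ i j, arr D (pt n x i) (pt n x j) ∈ arrows a := fun x hx i j =>
    mem_iUnion.2 ⟨(i, j), x, hx, rfl⟩
  constructor
  · intro x hx j
    have := (h _ (hm x hx j j)).1
    rwa [range_arr (pt_Rl hA x _ _)] at this
  · intro x hx i j
    have := (h _ (hm x hx i j)).2
    rwa [range_arr (pt_Rl hA x _ _), source_arr (pt_Rl hA x _ _)] at this

lemma triv_sub {N : ℕ} (p : WP D N) {n m : ℕ} {C : Set (D.MSp n)} (hC : C ⊆ p.WZ n) :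
    (⋃ w : Fin (m + 1) → Fin (n + 1) × Bool, (triv hA).θ hA w '' C) ⊆ p.WZ m := by
  intro y hy
  obtain ⟨w, x, hx, rfl⟩ := mem_iUnion.1 hy
  intro j
  rw [(triv hA).pt_θ hA w (by rw [triv_WZ]; exact mem_univ _)]
  have : ev (triv hA).φ (pt n x) (w j) = pt n x (w j).1 := by
    unfold ev
    split_ifs
    · exact hA.source_unit _ (pt_unit hA x _)
    · rfl
  rw [comp_apply, this]
  exact hC hx _

section

variable {N : ℕ} {p : WP D N} {n : ℕ}

/-- Composition with the boundary on the inside. -/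
lemma kcomp_bd (hA : D.IsAmpleGroupoid) (hP : D.IsPrincipal) {m : ℕ} {a : D.MSp (n + 1) → ℤ} (ha : a ∈ ccZ (D.MSp (n + 1)))
    (hs : support a ⊆ p.WZ (n + 1)) {B : (Fin (n + 1) → G) → ((Fin (m + 1) → G) →₀ ℤ)}
    (hB : Rep p.col p.φ B) :
    Fib (kcomp B bd) (ext a) ∧ act (kcomp B bd) (ext a) = act B (ext (D.mBdry n a)) := by
  have hu : support a ⊆ (triv hA).WZ (n + 1) := by rw [triv_WZ]; exact subset_univ _
  have h1 := (triv hA).fib hA hP (m := n) rep_bd ha hu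
  have h2 : ∀ v, ext a v ≠ 0 → ∀ y, bd v y ≠ 0 → y ∈ pt n ''
      (⋃ w : Fin (n + 1) → Fin (n + 2) × Bool, (triv hA).θ hA w '' support a) := by
    intro v hv y hy
    obtain ⟨x, hx, rfl⟩ := ext_ne hA hP hv
    exact (triv hA).F2_mem hA rep_bd hu hx hy
  have h3 := p.F1 hA hP hB ((triv hA).F2 hA hP (m := n) (ccZ_support_compact ha) hu)
    (triv_sub hA p hs)
  refine ⟨fib_kcomp h1 h2 h3, ?_⟩
  rw [act_kcomp h1 h2 h3, ext_mBdry hA hP ha]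

/-- Composition with the boundary on the outside. -/
lemma bd_kcomp (hA : D.IsAmpleGroupoid) (hP : D.IsPrincipal) {m : ℕ} {a : D.MSp n → ℤ} (ha : a ∈ ccZ (D.MSp n))
    (hs : support a ⊆ p.WZ n) {A : (Fin (n + 1) → G) → ((Fin (m + 2) → G) →₀ ℤ)}
    (hR : Rep p.col p.φ A) :
    Fib (kcomp bd A) (ext a) ∧ ∃ h ∈ ccZ (D.MSp (m + 1)),
      act (kcomp bd A) (ext a) = ext (D.mBdry m h) := by
  have h1 := p.fib hA hP hR ha hs
  have h2 : ∀ v, ext a v ≠ 0 → ∀ y, A v y ≠ 0 → y ∈ pt (m + 1) ''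
      (⋃ w : Fin (m + 2) → Fin (n + 1) × Bool, p.θ hA w '' support a) := by
    intro v hv y hy
    obtain ⟨x, hx, rfl⟩ := ext_ne hA hP hv
    exact p.F2_mem hA hR hs hx hy
  have h3 := (triv hA).F1 hA hP (m := m) rep_bd (p.F2 hA hP (m := m + 1) (ccZ_support_compact ha) hs)
    (by rw [triv_WZ]; exact subset_univ _)
  refine ⟨fib_kcomp h1 h2 h3, _, p.act_ccZ hA hP hR ha hs, ?_⟩
  rw [act_kcomp h1 h2 h3, ext_mBdry hA hP (p.act_ccZ hA hP hR ha hs), p.ext_act hA hP hR hs]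

/-- The condition to be a cycle. -/
def IsCyc : {n : ℕ} → (D.MSp n → ℤ) → Prop
  | 0, _ => True
  | (n + 1), a => D.mBdry n a = 0

lemma hom_bd (hA : D.IsAmpleGroupoid) (hP : D.IsPrincipal) {a : D.MSp n → ℤ} (ha : a ∈ ccZ (D.MSp n)) (hs : support a ⊆ p.WZ n) (hc : IsCyc a) :
    Fib (kcomp (hom p.col p.φ n) bd) (ext a) ∧ act (kcomp (hom p.col p.φ n) bd) (ext a) = 0 := by
  cases n with
  | zero =>
    have h0 : ∀ v : Fin 1 → G, kcomp (hom p.col p.φ 0) bd v = 0 := by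
      intro v
      unfold kcomp
      rw [sum_smul_bd]
      simp [hom]
    constructor
    · intro y
      simp [h0]
    · funext y
      simp [act, h0]
  | succ n =>
    have := kcomp_bd hA hP ha hs (rep_hom (col := p.col) (φ := p.φ) (k := n + 1))
    refine ⟨this.1, this.2.trans ?_⟩
    have hc' : D.mBdry n a = 0 := hc
    have : ext (0 : D.MSp n → ℤ) = 0 := by
      have := ext_eq hA hP (n := n) (D := D) (f := 0) (fun v hv => absurd rfl hv)
      exact this
    rw [hc', this, act_zero]

lemma main_eq (hA : D.IsAmpleGroupoid) (hP : D.IsPrincipal) {a : D.MSp n → ℤ} (ha : a ∈ ccZ (D.MSp n)) (hg : Good p a) (hc : IsCyc a) :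
    ∃ h ∈ ccZ (D.MSp (n + 1)), ext a - act (psi p.col p.φ) (ext a) = ext (D.mBdry n h) := by
  obtain ⟨f1, h, hh, he⟩ := bd_kcomp hA hP ha hg.1 (rep_hom (col := p.col) (φ := p.φ) (k := n + 1))
  obtain ⟨f2, h2⟩ := hom_bd hA hP ha hg.1 hc
  refine ⟨h, hh, ?_⟩
  have e1 := act_add_left f1 f2
  rw [h2, add_zero, he] at e1
  rw [← e1]
  have f3 := p.fib hA hP (rep_psi (col := p.col) (φ := p.φ) (k := n + 1)) ha hg.1
  have e2 := act_sub_left (fib_single (ext a)) f3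
  rw [act_single] at e2
  rw [← e2]
  refine act_congr fun v hv => ?_
  obtain ⟨x, hx, rfl⟩ := ext_ne hA hP hv
  exact (hom_spec _ _ (hg.2 x hx)).symm

lemma psi_bd (hA : D.IsAmpleGroupoid) (hP : D.IsPrincipal) {a : D.MSp (n + 1) → ℤ} (ha : a ∈ ccZ (D.MSp (n + 1))) (hg : Good p a)
    (hn : N < n + 2) : act (psi p.col p.φ) (ext (D.mBdry n a)) = 0 := by
  rw [← (kcomp_bd hA hP ha hg.1 (rep_psi (col := p.col) (φ := p.φ) (k := n + 1))).2]
  have : act (kcomp (psi p.col p.φ) bd) (ext a) = act (fun _ => 0) (ext a) := by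
    refine act_congr fun v hv => ?_
    obtain ⟨x, hx, rfl⟩ := ext_ne hA hP hv
    unfold kcomp
    rw [sum_smul_bd, ← psi_chain _ _ (hg.2 x hx), psi_big _ _ hn, map_zero]
  rw [this]
  funext y
  simp [act]

end

lemma ext_add (hA : D.IsAmpleGroupoid) (hP : D.IsPrincipal) {n : ℕ} (a b : D.MSp n → ℤ) : ext (a + b) = ext a + ext b := by
  refine Eq.trans ?_ (ext_eq hA hP (f := ext a + ext b) fun v hv => ?_)
  · congr 1
    funext x
    simp [ext_pt hA hP]
  · by_contra h
    exact hv (by simp [ext_off _ h])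

lemma ext_smul (hA : D.IsAmpleGroupoid) (hP : D.IsPrincipal) {n : ℕ} (k : ℤ) (a : D.MSp n → ℤ) : ext (k • a) = k • ext a := by
  refine Eq.trans ?_ (ext_eq hA hP (f := k • ext a) fun v hv => ?_)
  · congr 1
    funext x
    simp [ext_pt hA hP]
  · by_contra h
    exact hv (by simp [ext_off _ h])

lemma mBdry_add (hA : D.IsAmpleGroupoid) (hP : D.IsPrincipal) {n : ℕ} {a b : D.MSp (n + 1) → ℤ} (ha : a ∈ ccZ (D.MSp (n + 1)))
    (hb : b ∈ ccZ (D.MSp (n + 1))) : D.mBdry n (a + b) = D.mBdry n a + D.mBdry n b := by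
  apply ext_injective hA hP
  have hu : ∀ a : D.MSp (n + 1) → ℤ, support a ⊆ (triv hA).WZ (n + 1) := fun a => by
    rw [triv_WZ]; exact subset_univ _
  rw [ext_add hA hP, ext_mBdry hA hP ha, ext_mBdry hA hP hb,
    ext_mBdry hA hP ((ccZSub _).add_mem ha hb), ext_add hA hP]
  exact act_add_right ((triv hA).fib hA hP (m := n) rep_bd ha (hu a))
    ((triv hA).fib hA hP (m := n) rep_bd hb (hu b))

lemma mBdry_smul (hA : D.IsAmpleGroupoid) (hP : D.IsPrincipal) {n : ℕ} (k : ℤ) {a : D.MSp (n + 1) → ℤ} (ha : a ∈ ccZ (D.MSp (n + 1))) :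
    D.mBdry n (k • a) = k • D.mBdry n a := by
  apply ext_injective hA hP
  rw [ext_smul hA hP, ext_mBdry hA hP ha,
    ext_mBdry hA hP ((ccZSub _).zsmul_mem ha k), ext_smul hA hP, act_smul_right]

lemma mem_bdries (hA : D.IsAmpleGroupoid) (hP : D.IsPrincipal) {n : ℕ} {c : D.MSp n → ℤ} (h : c ∈ D.mBdries n) :
    ∃ a ∈ ccZ (D.MSp (n + 1)), D.mBdry n a = c := by
  refine AddSubgroup.closure_induction (p := fun c _ => ∃ a ∈ ccZ (D.MSp (n + 1)), D.mBdry n a = c)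
    (fun _ h => h) ?_ ?_ ?_ h
  · refine ⟨0, (ccZSub _).zero_mem, ?_⟩
    have := mBdry_smul hA hP (n := n) 0 ((ccZSub (D.MSp (n + 1))).zero_mem)
    rwa [zero_smul, zero_smul] at this
  · rintro _ _ _ _ ⟨a, ha, rfl⟩ ⟨b, hb, rfl⟩
    exact ⟨a + b, (ccZSub _).add_mem ha hb, mBdry_add hA hP ha hb⟩
  · rintro _ _ ⟨a, ha, rfl⟩
    refine ⟨-a, (ccZSub _).neg_mem ha, ?_⟩
    have := mBdry_smul hA hP (-1) ha
    rwa [neg_smul, neg_smul, one_smul, one_smul] at this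

lemma mem_cycles (hA : D.IsAmpleGroupoid) (hP : D.IsPrincipal) {n : ℕ} {c : D.MSp n → ℤ} (h : c ∈ D.mCycles n) :
    c ∈ ccZ (D.MSp n) ∧ IsCyc c := by
  cases n with
  | zero => exact ⟨h, trivial⟩
  | succ n =>
    refine AddSubgroup.closure_induction (p := fun c _ => c ∈ ccZ (D.MSp (n + 1)) ∧ D.mBdry n c = 0)
      (fun _ h => h) ?_ ?_ ?_ h
    · refine ⟨(ccZSub _).zero_mem, ?_⟩
      have := mBdry_smul hA hP (n := n) 0 ((ccZSub (D.MSp (n + 1))).zero_mem)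
      rwa [zero_smul, zero_smul] at this
    · rintro a b _ _ ⟨ha, ha'⟩ ⟨hb, hb'⟩
      exact ⟨(ccZSub _).add_mem ha hb, by rw [mBdry_add hA hP ha hb, ha', hb', add_zero]⟩
    · rintro a _ ⟨ha, ha'⟩
      refine ⟨(ccZSub _).neg_mem ha, ?_⟩
      have := mBdry_smul hA hP (-1) ha
      rwa [neg_smul, neg_smul, one_smul, one_smul, ha', neg_zero] at this

lemma vanish (hA : D.IsAmpleGroupoid) (hP : D.IsPrincipal) {d n : ℕ} (hdad : D.DadLE d) (hn : d < n) {c : D.MSp n → ℤ} (hc : c ∈ D.mCycles n) :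
    c ∈ D.mBdries n := by
  obtain ⟨h1, h2⟩ := mem_cycles hA hP hc
  obtain ⟨p, hp⟩ := exists_params hA hP hdad (arrows_compact hA hP h1)
  obtain ⟨h, hh, he⟩ := main_eq hA hP h1 (good_of hA hp) h2
  have h0 : act (psi p.col p.φ) (ext c) = 0 := by
    funext y
    unfold act
    simp [psi_big p.col p.φ (show d + 1 < n + 1 by omega)]
  rw [h0, sub_zero] at he
  exact AddSubgroup.subset_closure ⟨h, hh, (ext_injective hA hP he).symm⟩

lemma torsion (hA : D.IsAmpleGroupoid) (hP : D.IsPrincipal) {d : ℕ} (hdad : D.DadLE d) {c : D.MSp d → ℤ} (hc : c ∈ D.mCycles d) {k : ℤ}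
    (hk : k ≠ 0) (hkc : k • c ∈ D.mBdries d) : c ∈ D.mBdries d := by
  obtain ⟨h1, h2⟩ := mem_cycles hA hP hc
  obtain ⟨b, hb, hbc⟩ := mem_bdries hA hP hkc
  obtain ⟨p, hp⟩ := exists_params hA hP hdad
    ((arrows_compact hA hP h1).union (arrows_compact hA hP hb))
  obtain ⟨h, hh, he⟩ := main_eq hA hP h1 (good_of hA fun g hg => hp g (Or.inl hg)) h2
  have h0 : act (psi p.col p.φ) (ext c) = 0 := by
    have := psi_bd hA hP hb (good_of hA fun g hg => hp g (Or.inr hg)) (by omega)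
    rw [hbc, ext_smul hA hP, act_smul_right] at this
    exact (smul_eq_zero.1 this).resolve_left hk
  rw [h0, sub_zero] at he
  exact AddSubgroup.subset_closure ⟨h, hh, (ext_injective hA hP he).symm⟩

end OrdChain

/-- **Theorem A.**  Let `G` be a locally compact, Hausdorff, étale, principal, σ-compact,
ample groupoid with dynamic asymptotic dimension at most `d`.  Then the groupoid homology
satisfies `H_n(G) = 0` for all `n > d`, and `H_d(G)` is torsion-free. -/
theorem homology_vanishes_above_dad_and_top_torsion_free
    {G : Type u} [TopologicalSpace G] (D : GroupoidData G)
    (hAmple : D.IsAmpleGroupoid) (hPrincipal : D.IsPrincipal)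
    (hSigma : SigmaCompactSpace G) (d : ℕ) (hdad : D.DadLE d) :
    (∀ n, d < n → ∀ x : D.Homology n, x = 0) ∧
      (∀ (x : D.Homology d) (k : ℤ), k ≠ 0 → k • x = 0 → x = 0) := by
  constructor
  · intro n hn x
    induction x using QuotientAddGroup.induction_on with
    | H z =>
      obtain ⟨c, hc⟩ := z
      exact (QuotientAddGroup.eq_zero_iff _).2 (OrdChain.vanish hAmple hPrincipal hdad hn hc)
  · intro x k hk
    induction x using QuotientAddGroup.induction_on with
    | H z =>
      obtain ⟨c, hc⟩ := z
      intro h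
      have h' : k • c ∈ D.mBdries d := (QuotientAddGroup.eq_zero_iff (k • (⟨c, hc⟩ : D.mCycles d))).1 h
      exact (QuotientAddGroup.eq_zero_iff _).2 (OrdChain.torsion hAmple hPrincipal hdad hc hk h')
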